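/- arXiv:1102.2579 — 10 statements merged into one kernel-verified Lean document; each statement's English description precedes it below -/
import Mathlib

section
/- Let (X, B, S) be a t-(s,k,λ_t) divisible design with t ≥ 2 and v := |X|, and let i be an integer with 1 ≤ i ≤ t. Then (X, B, S) is also an i-(s,k,λ_i) divisible design; more precisely, every transversal i-subset of X is contained in exactly λ_i blocks, where λ_i is the unique integer satisfying λ_i · C(k−i, t−i) = λ_t · C(v·s⁻¹ − i, t−i) · s^(t−i) (here C(n,m) denotes the binomial coefficient). -/
/-!
Double counting. For a transversal set `Y`, call a point free if it is equivalent to no element of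
`Y`; there are `v - |Y| * s` free points (`card_free_add`). Counting pairs `(B, x)` with
`Y ⊆ B` and `x ∈ B \ Y` gives `N(Y) * (k - |Y|) = ∑ N(Y ∪ {x})`, summed over the free points `x`,
where `N` is the number of blocks through a set (`double_count`). Since `s ∣ v`, iterating this from
`|Y| = t` downwards yields `N(Y) * C(k-i, t-i) = λ_t * C(v/s-i, t-i) * s^(t-i)` (`count_mul_choose`).
A transversal `t`-set exists and lies in a block, so `t ≤ k`, and the factor `C(k-i, t-i)` cancels.
-/

open Finset

/-- Points equivalent to no element of `Y`. -/
def freePts {X : Type*} [Fintype X] (rel : X → X → Prop) [DecidableRel rel]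
    (Y : Finset X) : Finset X := univ.filter (fun x => ∀ y ∈ Y, ¬ rel y x)

theorem transversal_insert {X : Type*} [Fintype X] [DecidableEq X]
    (rel : X → X → Prop) (hrel : Equivalence rel) [DecidableRel rel] (Y : Finset X)
    (hY : ∀ x ∈ Y, ∀ y ∈ Y, rel x y → x = y) (x : X) (hx : x ∈ freePts rel Y) :
    (∀ a ∈ insert x Y, ∀ b ∈ insert x Y, rel a b → a = b) ∧
      (insert x Y).card = Y.card + 1 := by
  simp only [freePts, mem_filter, mem_univ, true_and] at hx
  have hxY : x ∉ Y := fun h => hx x h (hrel.refl x)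
  refine ⟨?_, card_insert_of_notMem hxY⟩
  intro a ha b hb hab
  rcases mem_insert.1 ha with rfl | haY <;> rcases mem_insert.1 hb with rfl | hbY
  · rfl
  · exact absurd (hrel.symm hab) (hx b hbY)
  · exact absurd hab (hx a haY)
  · exact hY a haY b hbY hab

theorem card_free_add {X : Type*} [Fintype X] [DecidableEq X]
    (rel : X → X → Prop) (hrel : Equivalence rel) [DecidableRel rel] (s : ℕ)
    (hB : ∀ x : X, (Finset.univ.filter (fun y => rel x y)).card = s) (Y : Finset X)
    (hY : ∀ x ∈ Y, ∀ y ∈ Y, rel x y → x = y) :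
    (freePts rel Y).card + Y.card * s = Fintype.card X := by
  have h1 : (univ.filter (fun x => ¬ ∀ y ∈ Y, ¬ rel y x))
      = Y.biUnion (fun y => univ.filter (fun x => rel y x)) := by
    ext x; simp
  have h2 : (Y.biUnion (fun y => univ.filter (fun x => rel y x))).card = Y.card * s := by
    rw [card_biUnion, sum_congr rfl (fun y _ => hB y), sum_const, smul_eq_mul]
    intro a ha b hb hab
    refine Finset.disjoint_left.2 ?_
    intro x hxa hxb
    simp only [mem_filter, mem_univ, true_and] at hxa hxb
    exact hab (hY a ha b hb (hrel.trans hxa (hrel.symm hxb)))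
  rw [← h2, ← h1, freePts, card_filter_add_card_filter_not, card_univ]

theorem exists_transversal {X : Type*} [Fintype X] [DecidableEq X]
    (rel : X → X → Prop) (hrel : Equivalence rel) [DecidableRel rel] (s : ℕ) (hs : 0 < s)
    (hB : ∀ x : X, (Finset.univ.filter (fun y => rel x y)).card = s) (j : ℕ)
    (hj : j ≤ Fintype.card X / s) :
    ∃ Y : Finset X, (∀ x ∈ Y, ∀ y ∈ Y, rel x y → x = y) ∧ Y.card = j := by
  induction j with
  | zero => exact ⟨∅, by simp, rfl⟩
  | succ j ih =>
    obtain ⟨Y, hY, hc⟩ := ih (by omega)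
    have h := card_free_add rel hrel s hB Y hY
    have h2 := (Nat.le_div_iff_mul_le hs).1 hj
    rw [hc] at h
    have h3 : 0 < (freePts rel Y).card := by nlinarith
    obtain ⟨x, hx⟩ := card_pos.1 h3
    have h4 := transversal_insert rel hrel Y hY x hx
    exact ⟨insert x Y, h4.1, by rw [h4.2, hc]⟩

/-- A transversal set of size `v / s` has no free point, since adding one would give a
transversal set of size `v / s + 1`, hence `(v / s + 1) * s ≤ v`. -/
theorem div_mul_eq_card {X : Type*} [Fintype X] [DecidableEq X]
    (rel : X → X → Prop) (hrel : Equivalence rel) [DecidableRel rel] (s : ℕ) (hs : 0 < s)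
    (hB : ∀ x : X, (Finset.univ.filter (fun y => rel x y)).card = s) :
    Fintype.card X / s * s = Fintype.card X := by
  obtain ⟨Y, hY, hc⟩ := exists_transversal rel hrel s hs hB _ le_rfl
  have h := card_free_add rel hrel s hB Y hY
  rcases (freePts rel Y).eq_empty_or_nonempty with he | ⟨x, hx⟩
  · rw [he, hc] at h
    simpa using h
  · exfalso
    obtain ⟨h1, h2⟩ := transversal_insert rel hrel Y hY x hx
    have h3 := card_free_add rel hrel s hB _ h1
    rw [h2, hc] at h3
    have h4 : (Fintype.card X / s + 1) * s ≤ Fintype.card X := by omega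
    have h5 := (Nat.le_div_iff_mul_le hs).2 h4
    omega

theorem double_count {X : Type*} [Fintype X] [DecidableEq X]
    (rel : X → X → Prop) (hrel : Equivalence rel) [DecidableRel rel] (k : ℕ)
    (𝓑 : Finset (Finset X))
    (hA : ∀ B ∈ 𝓑, (∀ x ∈ B, ∀ y ∈ B, rel x y → x = y) ∧ B.card = k) (Y : Finset X) :
    (𝓑.filter (fun B => Y ⊆ B)).card * (k - Y.card) =
      ∑ x ∈ freePts rel Y, (𝓑.filter (fun B => insert x Y ⊆ B)).card := by
  have h := sum_card_bipartiteAbove_eq_sum_card_bipartiteBelow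
    (s := 𝓑.filter (fun B => Y ⊆ B)) (t := freePts rel Y) (fun B x => x ∈ B)
  have h1 : ∀ B ∈ 𝓑.filter (fun B => Y ⊆ B),
      ((freePts rel Y).bipartiteAbove (fun B x => x ∈ B) B).card = k - Y.card := by
    intro B hB
    obtain ⟨hB, hYB⟩ := mem_filter.1 hB
    rw [← (hA B hB).2, ← card_sdiff_of_subset hYB]
    congr 1
    ext x
    simp only [bipartiteAbove, freePts, mem_filter, mem_univ, true_and, mem_sdiff]
    constructor
    · rintro ⟨h1, h2⟩
      exact ⟨h2, fun h => h1 x h (hrel.refl x)⟩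
    · rintro ⟨h1, h2⟩
      refine ⟨fun y hy hyx => h2 ?_, h1⟩
      rwa [← (hA B hB).1 y (hYB hy) x h1 hyx]
  rw [sum_congr rfl h1, sum_const, smul_eq_mul] at h
  rw [h]
  refine sum_congr rfl fun x _ => ?_
  congr 1
  ext B
  simp only [bipartiteBelow, mem_filter, insert_subset_iff]
  tauto

/-- The counting identity for transversal sets of size `t - j`, with `j` in the role of `t - i`. -/
theorem count_mul_choose {X : Type*} [Fintype X] [DecidableEq X]
    (rel : X → X → Prop) (hrel : Equivalence rel) [DecidableRel rel]
    (t s k lt m : ℕ) (𝓑 : Finset (Finset X))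
    (hA : ∀ B ∈ 𝓑, (∀ x ∈ B, ∀ y ∈ B, rel x y → x = y) ∧ B.card = k)
    (hB : ∀ x : X, (Finset.univ.filter (fun y => rel x y)).card = s)
    (hC : ∀ Y : Finset X, (∀ x ∈ Y, ∀ y ∈ Y, rel x y → x = y) → Y.card = t →
      (𝓑.filter (fun B => Y ⊆ B)).card = lt)
    (hm : m * s = Fintype.card X) (htm : t ≤ m) (htk : t ≤ k) (j : ℕ) :
    ∀ Y : Finset X, (∀ x ∈ Y, ∀ y ∈ Y, rel x y → x = y) → Y.card + j = t →
      (𝓑.filter (fun B => Y ⊆ B)).card * (k - Y.card).choose j =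
        lt * (m - Y.card).choose j * s ^ j := by
  induction j with
  | zero =>
    intro Y hY hc
    simp [hC Y hY hc]
  | succ j ih =>
    intro Y hY hc
    obtain ⟨a, ha⟩ : ∃ a, k - Y.card = a + 1 := ⟨k - Y.card - 1, by omega⟩
    obtain ⟨b, hb⟩ : ∃ b, m - Y.card = b + 1 := ⟨m - Y.card - 1, by omega⟩
    have h := double_count rel hrel k 𝓑 hA Y
    have hf : (freePts rel Y).card = (b + 1) * s := by
      have h1 := card_free_add rel hrel s hB Y hY
      have h2 : m = Y.card + (b + 1) := by omega
      rw [← hm, h2, add_mul] at h1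
      omega
    have hsum : (∑ x ∈ freePts rel Y, (𝓑.filter (fun B => insert x Y ⊆ B)).card) * a.choose j
        = (b + 1) * s * (lt * b.choose j * s ^ j) := by
      rw [sum_mul, ← hf, ← smul_eq_mul, ← sum_const]
      refine sum_congr rfl fun x hx => ?_
      obtain ⟨h1, h2⟩ := transversal_insert rel hrel Y hY x hx
      have h3 := ih _ h1 (by omega)
      rwa [h2, show k - (Y.card + 1) = a by omega, show m - (Y.card + 1) = b by omega] at h3
    rw [← h, ha] at hsum
    rw [ha, hb]
    have e1 := Nat.add_one_mul_choose_eq a j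
    have e2 := Nat.add_one_mul_choose_eq b j
    -- Absorption `(n + 1) * C(n, j) = C(n + 1, j + 1) * (j + 1)` on both sides.
    refine Nat.eq_of_mul_eq_mul_right (Nat.succ_pos j) ?_
    set N := (𝓑.filter (fun B => Y ⊆ B)).card
    calc N * (a + 1).choose (j + 1) * (j + 1)
        = N * (a + 1) * a.choose j := by rw [mul_assoc, ← e1, mul_assoc]
      _ = (b + 1) * b.choose j * (lt * s ^ (j + 1)) := by rw [hsum]; ring
      _ = lt * (b + 1).choose (j + 1) * s ^ (j + 1) * (j + 1) := by rw [e2]; ring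

/-- A `t`-`(s,k,λ_t)` divisible design is also an `i`-`(s,k,λ_i)` divisible design for
`1 ≤ i ≤ t`, where `λ_i · C(k-i, t-i) = λ_t · C(v/s - i, t-i) · s^(t-i)`. -/
theorem stmt_0 {X : Type*} [Fintype X] [DecidableEq X]
    (rel : X → X → Prop) (hrel : Equivalence rel) [DecidableRel rel]
    (t s k lt : ℕ) (ht : 0 < t) (hs : 0 < s) (hk : 0 < k) (hlt : 0 < lt)
    (𝓑 : Finset (Finset X))
    -- (A) blocks are transversal `k`-subsets
    (hA : ∀ B ∈ 𝓑, (∀ x ∈ B, ∀ y ∈ B, rel x y → x = y) ∧ B.card = k)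
    -- (B) every point class has `s` elements
    (hB : ∀ x : X, (Finset.univ.filter (fun y => rel x y)).card = s)
    -- (C) every transversal `t`-subset lies in exactly `λ_t` blocks
    (hC : ∀ Y : Finset X, (∀ x ∈ Y, ∀ y ∈ Y, rel x y → x = y) → Y.card = t →
      (𝓑.filter (fun B => Y ⊆ B)).card = lt)
    -- (D) `t ≤ v / s`
    (hD : t ≤ Fintype.card X / s)
    (ht2 : 2 ≤ t) (i li : ℕ) (hi1 : 1 ≤ i) (hit : i ≤ t)
    (hli : li * (k - i).choose (t - i) =
      lt * ((Fintype.card X / s - i).choose (t - i)) * s ^ (t - i)) :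
    0 < li ∧
      ∀ Y : Finset X, (∀ x ∈ Y, ∀ y ∈ Y, rel x y → x = y) → Y.card = i →
        (𝓑.filter (fun B => Y ⊆ B)).card = li := by
  have hm := div_mul_eq_card rel hrel s hs hB
  obtain ⟨T, hT, hTc⟩ := exists_transversal rel hrel s hs hB t hD
  have htk : t ≤ k := by
    have h := hC T hT hTc
    obtain ⟨B, hBm⟩ := card_pos.1 (h ▸ hlt)
    obtain ⟨hBB, hTB⟩ := mem_filter.1 hBm
    rw [← hTc, ← (hA B hBB).2]
    exact card_le_card hTB
  have hpos : 0 < (k - i).choose (t - i) := Nat.choose_pos (by omega)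
  refine ⟨?_, fun Y hY hc => ?_⟩
  · have h1 : 0 < (Fintype.card X / s - i).choose (t - i) := Nat.choose_pos (by omega)
    refine Nat.pos_of_mul_pos_right (b := (k - i).choose (t - i)) ?_
    rw [hli]
    positivity
  · have h := count_mul_choose rel hrel t s k lt _ 𝓑 hA hB hC hm hD htk (t - i) Y hY (by omega)
    rw [hc, ← hli] at h
    exact Nat.eq_of_mul_eq_mul_right hpos h
end

section
/- (Spera's theorem.) Let X be a finite set with v := |X| elements, endowed with an equivalence relation ~ whose set of classes is S, and let G be a group acting on X such that: (a) ~ is G-invariant (x ~ y implies x·g ~ y·g for all g ∈ G); (b) all equivalence classes of ~ have the same cardinality s; (c) G acts transitively on the set of ~-transversal t-subsets of X, for some positive integer t ≤ |S|. Let B₀ be a ~-transversal k-subset of X with t ≤ k, and let B := {B₀·g : g ∈ G} be the orbit of B₀. Then (X, B, S) is a t-(s,k,λ_t) divisible design, where λ_t is determined by λ_t · C(v·s⁻¹, t) · s^t · |G_{B₀}| = |G| · C(k, t), with G_{B₀} the setwise stabiliser of B₀ in G. -/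
open Finset

/-!
Spera's theorem is a double count of the pairs `(Y, B)` with `Y` a transversal `t`-subset of `X`
and `B` a block containing `Y`. All blocks are translates of `B₀`, hence transversal of size `k`,
so each contains `C(k, t)` transversal `t`-subsets. Since `G` is transitive on transversal
`t`-subsets and permutes the blocks, each `Y` lies in the same number of blocks. There are
`C(v/s, t) * s^t` transversal `t`-subsets (`card_injOn_subsets`: choose the `t` classes, then a
point in each), and `|G| = |blocks| * |G_{B₀}|` by orbit-stabiliser (`card_orbit_mul_card_stab`).
Hence the common number satisfies the equation that determines `lt`.
-/

/-- A partial transversal with image `A` amounts to the choice of one point in the fibre over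
each element of `A`. -/
lemma card_injOn_image_eq {X Q : Type*} [Fintype X] [DecidableEq X] [DecidableEq Q]
    (f : X → Q) (s : ℕ) (hf : ∀ q, (univ.filter (fun x => f x = q)).card = s) (A : Finset Q) :
    (univ.filter (fun Y : Finset X =>
      (∀ x ∈ Y, ∀ y ∈ Y, f x = f y → x = y) ∧ Y.image f = A)).card = s ^ A.card := by
  have h1 : (A.pi (fun q => univ.filter (fun x => f x = q))).card = s ^ A.card := by
    rw [Finset.card_pi]; simp [hf]
  rw [← h1]
  symm
  refine Finset.card_bij (fun g _ => A.attach.image (fun a => g a.1 a.2)) ?_ ?_ ?_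
  · intro g hg
    simp only [mem_pi, mem_filter, mem_univ, true_and] at hg
    simp only [mem_filter, mem_univ, true_and, mem_image, mem_attach, Subtype.exists]
    refine ⟨?_, ?_⟩
    · rintro _ ⟨a, ha, rfl⟩ _ ⟨b, hb, rfl⟩ h
      rw [hg, hg] at h
      subst h
      rfl
    · ext q
      simp only [mem_image, mem_attach, true_and, Subtype.exists]
      constructor
      · rintro ⟨_, ⟨a, ha, rfl⟩, rfl⟩
        rwa [hg]
      · intro hq
        exact ⟨_, ⟨q, hq, rfl⟩, hg q hq⟩
  · intro g hg g' hg' h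
    simp only [mem_pi, mem_filter, mem_univ, true_and] at hg hg'
    funext a ha
    have : g a ha ∈ A.attach.image (fun a => g' a.1 a.2) := by
      rw [← h]
      exact mem_image.2 ⟨⟨a, ha⟩, mem_attach _ _, rfl⟩
    obtain ⟨⟨b, hb⟩, -, hb'⟩ := mem_image.1 this
    have hba : b = a := by
      rw [← hg' b hb, ← hg a ha]
      exact congrArg f hb'
    subst hba
    exact hb'.symm
  · intro Y hY
    simp only [mem_filter, mem_univ, true_and] at hY
    obtain ⟨hinj, rfl⟩ := hY
    have hc : ∀ q, q ∈ Y.image f → ∃ x ∈ Y, f x = q := fun q hq => mem_image.1 hq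
    choose c hcY hcf using hc
    refine ⟨c, mem_pi.2 fun q hq => mem_filter.2 ⟨mem_univ _, hcf q hq⟩, ?_⟩
    ext x
    simp only [mem_image, mem_attach, true_and, Subtype.exists]
    constructor
    · rintro ⟨q, hq, rfl⟩
      exact hcY q _
    · intro hx
      have hq : f x ∈ Y.image f := mem_image_of_mem f hx
      exact ⟨f x, mem_image.1 hq, hinj _ (hcY _ hq) _ hx (hcf _ hq)⟩

lemma card_injOn_subsets {X Q : Type*} [Fintype X] [DecidableEq X] [Fintype Q] [DecidableEq Q]
    (f : X → Q) (s t : ℕ) (hf : ∀ q, (univ.filter (fun x => f x = q)).card = s) :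
    (univ.filter (fun Y : Finset X =>
      (∀ x ∈ Y, ∀ y ∈ Y, f x = f y → x = y) ∧ Y.card = t)).card
      = (Fintype.card Q).choose t * s ^ t := by
  have key : ∀ Y : Finset X, (∀ x ∈ Y, ∀ y ∈ Y, f x = f y → x = y) →
      (Y.image f).card = Y.card := fun Y hY =>
    card_image_of_injOn fun x hx y hy h => hY x hx y hy h
  rw [card_eq_sum_card_fiberwise (f := fun Y => Y.image f) (t := powersetCard t univ)]
  · rw [← card_univ (α := Q), ← card_powersetCard, ← smul_eq_mul, ← sum_const]
    refine sum_congr rfl fun A hA => ?_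
    have hA' : A.card = t := (mem_powersetCard.1 hA).2
    rw [← hA', ← card_injOn_image_eq f s hf A, filter_filter]
    congr 1
    refine filter_congr fun Y _ => ?_
    constructor
    · rintro ⟨⟨h1, -⟩, h3⟩
      exact ⟨h1, h3⟩
    · rintro ⟨h1, h3⟩
      exact ⟨⟨h1, by rw [← key Y h1, h3]⟩, h3⟩
  · intro Y hY
    simp only [coe_filter, mem_univ, true_and, Set.mem_ofPred_eq] at hY
    simp only [mem_coe, mem_powersetCard]
    exact ⟨subset_univ _, by rw [key Y hY.1, hY.2]⟩

section
open scoped Pointwise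

lemma card_orbit_mul_card_stab {X : Type*} [DecidableEq X]
    {G : Type*} [Group G] [Fintype G] [MulAction G X] (B₀ : Finset X) :
    (univ.image (fun g : G => B₀.image (fun x => g • x))).card *
      Nat.card {g : G // B₀.image (fun x => g • x) = B₀} = Nat.card G := by
  have h := (MulAction.stabilizer G B₀).card_mul_index
  rw [MulAction.index_stabilizer, mul_comm] at h
  have h2 : (MulAction.orbit G B₀).ncard
      = (univ.image (fun g : G => B₀.image (fun x => g • x))).card := by
    rw [← Set.ncard_coe_finset, coe_image, coe_univ, Set.image_univ]
    rfl
  rw [h2] at h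
  exact h

end


/-- **Spera's theorem.** If `~` is a `G`-invariant equivalence relation on `X` with all classes
of size `s` and `G` acts transitively on the `~`-transversal `t`-subsets, then the orbit of a
`~`-transversal `k`-subset `B₀` (with `t ≤ k`) is the block set of a `t`-`(s,k,λ_t)` divisible
design on `X`, where `λ_t · C(v/s, t) · s^t · |G_{B₀}| = |G| · C(k,t)`. -/
theorem stmt_1 {X : Type*} [Fintype X] [DecidableEq X]
    {G : Type*} [Group G] [Fintype G] [MulAction G X]
    (rel : X → X → Prop) (hrel : Equivalence rel) [DecidableRel rel]
    (t s k : ℕ) (ht : 0 < t)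
    -- `t ≤ |S|`, the number of equivalence classes
    (htS : t ≤ Nat.card (Quotient (⟨rel, hrel⟩ : Setoid X)))
    -- (a) `~` is `G`-invariant
    (ha : ∀ (g : G) (x y : X), rel x y → rel (g • x) (g • y))
    -- (b) all equivalence classes have cardinality `s`
    (hb : ∀ x : X, (Finset.univ.filter (fun y => rel x y)).card = s)
    -- (c) `G` is transitive on the `~`-transversal `t`-subsets
    (hc : ∀ Y Y' : Finset X,
      (∀ x ∈ Y, ∀ y ∈ Y, rel x y → x = y) → Y.card = t →
      (∀ x ∈ Y', ∀ y ∈ Y', rel x y → x = y) → Y'.card = t →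
        ∃ g : G, Y.image (fun x => g • x) = Y')
    -- the base block
    (B₀ : Finset X) (hB₀ : ∀ x ∈ B₀, ∀ y ∈ B₀, rel x y → x = y)
    (hB₀k : B₀.card = k) (htk : t ≤ k)
    (lt : ℕ)
    -- the parameter `λ_t`
    (hlt : lt * (Fintype.card X / s).choose t * s ^ t *
        Nat.card {g : G // B₀.image (fun x => g • x) = B₀} =
      Nat.card G * k.choose t) :
    0 < lt ∧
    (∀ B ∈ Finset.univ.image (fun g : G => B₀.image (fun x => g • x)),
      (∀ x ∈ B, ∀ y ∈ B, rel x y → x = y) ∧ B.card = k) ∧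
    (∀ Y : Finset X, (∀ x ∈ Y, ∀ y ∈ Y, rel x y → x = y) → Y.card = t →
      ((Finset.univ.image (fun g : G => B₀.image (fun x => g • x))).filter
        (fun B => Y ⊆ B)).card = lt) ∧
    t ≤ Fintype.card X / s := by
  classical
  let S : Setoid X := ⟨rel, hrel⟩
  let π : X → Quotient S := Quotient.mk S
  have hπ : ∀ x y, π x = π y ↔ rel x y := fun x y => Quotient.eq
  have hfib : ∀ q, (univ.filter (fun x => π x = q)).card = s := by
    intro q
    induction q using Quotient.inductionOn with | _ x => ?_
    rw [← hb x]
    congr 1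
    refine filter_congr fun y _ => ?_
    exact (hπ y x).trans ⟨hrel.symm, hrel.symm⟩
  have hcardX : Fintype.card X = Fintype.card (Quotient S) * s := by
    rw [← card_univ, card_eq_sum_card_fiberwise (f := π) (t := univ) (by simp)]
    simp [hfib]
  rw [Nat.card_eq_fintype_card] at htS
  have hspos : 0 < s := by
    have : 0 < Fintype.card (Quotient S) := lt_of_lt_of_le ht htS
    obtain ⟨q⟩ := Fintype.card_pos_iff.1 this
    obtain ⟨x, -⟩ := Quotient.exists_rep q
    rw [← hb x]
    exact card_pos.2 ⟨x, by simpa using hrel.refl x⟩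
  have hdiv : Fintype.card X / s = Fintype.card (Quotient S) := by
    rw [hcardX, Nat.mul_div_cancel _ hspos]
  rw [hdiv] at hlt ⊢
  have hGpos : 0 < Nat.card G := Nat.card_pos
  have hltpos : 0 < lt := by
    refine Nat.pos_of_ne_zero fun h => ?_
    have := Nat.mul_pos hGpos (Nat.choose_pos htk)
    rw [← hlt, h] at this
    simp at this
  have hblock : ∀ B ∈ univ.image (fun g : G => B₀.image (fun x => g • x)),
      (∀ x ∈ B, ∀ y ∈ B, rel x y → x = y) ∧ B.card = k := by
    intro B hB
    obtain ⟨g, -, rfl⟩ := mem_image.1 hB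
    refine ⟨?_, by rw [card_image_of_injective _ (MulAction.injective g), hB₀k]⟩
    simp only [mem_image]
    rintro _ ⟨x, hx, rfl⟩ _ ⟨y, hy, rfl⟩ h
    have h' := ha g⁻¹ _ _ h
    rw [inv_smul_smul, inv_smul_smul] at h'
    rw [hB₀ x hx y hy h']
  refine ⟨hltpos, hblock, ?_, htS⟩
  set Bs := univ.image (fun g : G => B₀.image (fun x => g • x)) with hBs
  -- Translation by `g` embeds the blocks through `Y` into the blocks through `Y·g`.
  have hle : ∀ (Y : Finset X) (g : G), (Bs.filter (fun B => Y ⊆ B)).card ≤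
      (Bs.filter (fun B => Y.image (fun x => g • x) ⊆ B)).card := by
    intro Y g
    refine card_le_card_of_injOn (fun B => B.image (fun x => g • x)) ?_
      ((image_injective (MulAction.injective g)).injOn)
    intro B hB
    simp only [coe_filter, Set.mem_ofPred_eq] at hB ⊢
    refine ⟨?_, image_subset_image hB.2⟩
    obtain ⟨h, -, rfl⟩ := mem_image.1 hB.1
    refine mem_image.2 ⟨g * h, mem_univ _, ?_⟩
    simp [image_image, Function.comp_def, mul_smul]
  intro Y₀ hY₀ hY₀t
  set T := univ.filter (fun Y : Finset X =>
    (∀ x ∈ Y, ∀ y ∈ Y, π x = π y → x = y) ∧ Y.card = t) with hT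
  have hTcard : T.card = (Fintype.card (Quotient S)).choose t * s ^ t :=
    card_injOn_subsets π s t hfib
  have hconst : ∀ Y ∈ T, (Bs.filter (fun B => Y ⊆ B)).card =
      (Bs.filter (fun B => Y₀ ⊆ B)).card := by
    intro Y hY
    simp only [hT, mem_filter, mem_univ, true_and, hπ] at hY
    apply le_antisymm
    · obtain ⟨g, hg⟩ := hc Y Y₀ hY.1 hY.2 hY₀ hY₀t
      rw [← hg]
      exact hle Y g
    · obtain ⟨g, hg⟩ := hc Y₀ Y hY₀ hY₀t hY.1 hY.2
      rw [← hg]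
      exact hle Y₀ g
  have hdc := sum_card_bipartiteAbove_eq_sum_card_bipartiteBelow
    (s := T) (t := Bs) (fun Y B => Y ⊆ B)
  have hL : ∑ Y ∈ T, (bipartiteAbove (fun Y B => Y ⊆ B) Bs Y).card
      = T.card * (Bs.filter (fun B => Y₀ ⊆ B)).card := by
    rw [← smul_eq_mul, ← sum_const]
    exact sum_congr rfl hconst
  have hR : ∑ B ∈ Bs, (bipartiteBelow (fun Y B => Y ⊆ B) T B).card
      = Bs.card * k.choose t := by
    rw [← smul_eq_mul, ← sum_const]
    refine sum_congr rfl fun B hB => ?_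
    rw [← (hblock B hB).2, ← card_powersetCard]
    congr 1
    ext Y
    simp only [bipartiteBelow, hT, mem_filter, mem_univ, true_and, hπ, mem_powersetCard]
    constructor
    · rintro ⟨⟨-, h2⟩, h3⟩
      exact ⟨h3, h2⟩
    · rintro ⟨h3, h2⟩
      exact ⟨⟨fun x hx y hy => (hblock B hB).1 x (h3 hx) y (h3 hy), h2⟩, h3⟩
  rw [hL, hR, hTcard] at hdc
  have hst : Bs.card * Nat.card {g : G // B₀.image (fun x => g • x) = B₀} = Nat.card G :=
    card_orbit_mul_card_stab B₀
  have hstpos : 0 < Nat.card {g : G // B₀.image (fun x => g • x) = B₀} :=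
    Nat.pos_of_ne_zero fun h => by rw [h, mul_zero] at hst; omega
  set N := Nat.card {g : G // B₀.image (fun x => g • x) = B₀}
  have hpos : 0 < (Fintype.card (Quotient S)).choose t * s ^ t * N :=
    Nat.mul_pos (Nat.mul_pos (Nat.choose_pos htS) (Nat.pow_pos hspos)) hstpos
  refine Nat.eq_of_mul_eq_mul_left hpos ?_
  calc _ = ((Fintype.card (Quotient S)).choose t * s ^ t *
        (Bs.filter (fun B => Y₀ ⊆ B)).card) * N := by ring
    _ = Bs.card * N * k.choose t := by rw [hdc]; ring
    _ = _ := by rw [hst, ← hlt]; ring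
end

section
/- Let X be a finite set endowed with an equivalence relation ~ whose set of classes is S, and let G be a group acting on X such that: (a) ~ is G-invariant; (c₁) G acts transitively on the set of ~-transversal t-tuples of X (t-tuples whose entries lie in t distinct equivalence classes), for some positive integer t ≤ |S|. Let B₀ be a ~-transversal k-subset of X with t ≤ k. Then all equivalence classes of ~ have the same cardinality s, and (X, {B₀·g : g ∈ G}, S) is a t-(s,k,λ_t) divisible design, where λ_t is determined by λ_t · C(v·s⁻¹, t) · s^t · |G_{B₀}| = |G| · C(k, t), with v := |X| and G_{B₀} the setwise stabiliser of B₀ in G. -/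
/-!
The proof counts in two ways the pairs `(Y, B)` with `Y` a transversal `t`-subset, `B` a block of
the orbit of `B₀`, and `Y ⊆ B`.

Every point is an entry of a transversal `t`-tuple (as `0 < t ≤ |S|`), so `G` is transitive on
points and, since `~` is invariant, all classes have the same size `s`; hence `v / s = |S|`.
A transversal `t`-subset is a choice of `t` classes together with a point in each of them, so there
are `C(|S|, t) * s ^ t` of them (`card_transversals`). Transitivity on tuples gives transitivity on
transversal `t`-subsets, so each of them lies in the same number of blocks (`card_blocks_smul`).
On the other side, blocks are transversal of size `k`, so each contains `C(k, t)` transversal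
`t`-subsets. The orbit-stabiliser theorem turns the number of blocks into `|G| / |G_{B₀}|`, and the
equation defining `λ_t` follows after cancelling nonzero factors.
-/

open Finset
open scoped Pointwise

/-- If all fibres of `f : X → Q` have `s` elements, then there are `C(|Q|, t) * s ^ t` subsets of
size `t` on which `f` is injective: choose the image, then a point in each fibre over it. -/
theorem card_transversals {X Q : Type*} [Fintype X] [DecidableEq X] [Fintype Q] [DecidableEq Q]
    (f : X → Q) (s t : ℕ) (hs : ∀ q, (univ.filter (fun x => f x = q)).card = s) :
    ∀ T : Finset (Finset X), (∀ Y, Y ∈ T ↔ Set.InjOn f Y ∧ Y.card = t) →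
      T.card = (Fintype.card Q).choose t * s ^ t := by
  intro T hT
  have hmaps : ∀ Y ∈ T, Y.image f ∈ powersetCard t (univ : Finset Q) := by
    intro Y hY
    obtain ⟨h1, h2⟩ := (hT Y).1 hY
    rw [mem_powersetCard]
    exact ⟨subset_univ _, by rw [card_image_of_injOn h1, h2]⟩
  rw [card_eq_sum_card_fiberwise hmaps]
  have key : ∀ P ∈ powersetCard t (univ : Finset Q),
      (T.filter (fun Y => Y.image f = P)).card = s ^ t := by
    intro P hP
    have hPc : P.card = t := (mem_powersetCard.1 hP).2
    have hpi : (Fintype.piFinset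
        (fun q : P => univ.filter (fun x => f x = (q : Q)))).card = s ^ t := by
      rw [Fintype.card_piFinset]
      simp [hs, hPc]
    rw [← hpi]
    symm
    have sec : ∀ a ∈ Fintype.piFinset (fun q : P => univ.filter (fun x => f x = (q : Q))),
        ∀ q, f (a q) = q := by
      intro a ha q
      simpa using (Fintype.mem_piFinset.1 ha q)
    refine card_bij (fun a _ => univ.image a) ?_ ?_ ?_
    · intro a ha
      have hsec := sec a ha
      have hinj : Function.Injective a := by
        intro q q' h
        apply Subtype.ext
        rw [← hsec q, ← hsec q', h]
      rw [mem_filter, hT]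
      refine ⟨⟨?_, ?_⟩, ?_⟩
      · intro x hx y hy hxy
        simp only [coe_image, coe_univ, Set.image_univ, Set.mem_range] at hx hy
        obtain ⟨q, rfl⟩ := hx
        obtain ⟨q', rfl⟩ := hy
        rw [hsec, hsec] at hxy
        rw [Subtype.ext hxy]
      · rw [card_image_of_injective _ hinj]
        simp [hPc]
      · ext q
        simp only [mem_image, mem_univ, true_and]
        constructor
        · rintro ⟨x, ⟨q', rfl⟩, rfl⟩
          rw [hsec]
          exact q'.2
        · intro hq
          exact ⟨a ⟨q, hq⟩, ⟨_, rfl⟩, hsec _⟩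
    · intro a ha b hb hab
      funext q
      have h1 : a q ∈ univ.image b := hab ▸ mem_image_of_mem a (mem_univ q)
      obtain ⟨q', -, h⟩ := mem_image.1 h1
      have : q' = q := by
        apply Subtype.ext
        rw [← sec b hb q', ← sec a ha q, h]
      rw [← h, this]
    · intro Y hY
      rw [mem_filter, hT] at hY
      obtain ⟨⟨hinj, -⟩, him⟩ := hY
      have hex : ∀ q : P, ∃ x ∈ Y, f x = q := by
        intro q
        exact mem_image.1 (him.symm ▸ q.2 : (q : Q) ∈ Y.image f)
      choose a haY haf using hex
      refine ⟨a, ?_, ?_⟩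
      · rw [Fintype.mem_piFinset]
        intro q
        simp [haf]
      · ext x
        simp only [mem_image, mem_univ, true_and]
        constructor
        · rintro ⟨q, rfl⟩
          exact haY q
        · intro hx
          have hq : f x ∈ P := him ▸ mem_image_of_mem f hx
          exact ⟨⟨f x, hq⟩, hinj (haY _) hx (haf _)⟩
  rw [sum_congr rfl key, sum_const, card_powersetCard, card_univ, smul_eq_mul]

/-- In a `G`-invariant family of blocks, `Y` and its translates lie in equally many blocks. -/
theorem card_blocks_smul {X G : Type*} [DecidableEq X] [Group G] [MulAction G X]
    (O : Finset (Finset X)) (hO : ∀ (g : G), ∀ B ∈ O, g • B ∈ O) (g : G) (Y : Finset X) :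
    (O.filter (fun B => g • Y ⊆ B)).card = (O.filter (fun B => Y ⊆ B)).card := by
  symm
  refine card_bij (fun B _ => g • B) ?_ ?_ ?_
  · intro B hB
    rw [mem_filter] at hB ⊢
    exact ⟨hO g B hB.1, smul_finset_subset_smul_finset hB.2⟩
  · intro B _ B' _ h
    exact smul_left_cancel g h
  · intro B hB
    rw [mem_filter] at hB
    refine ⟨g⁻¹ • B, mem_filter.2 ⟨hO _ _ hB.1, ?_⟩, smul_inv_smul g B⟩
    rw [subset_smul_finset_iff, inv_inv]
    exact hB.2

/-- Variant of Spera's theorem: if `~` is `G`-invariant and `G` acts transitively on the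
`~`-transversal `t`-tuples, then all equivalence classes have the same size `s` and the orbit
of a `~`-transversal `k`-subset `B₀` (with `t ≤ k`) yields a `t`-`(s,k,λ_t)` divisible design,
where `λ_t · C(v/s, t) · s^t · |G_{B₀}| = |G| · C(k,t)`. -/
theorem stmt_2 {X : Type*} [Fintype X] [DecidableEq X]
    {G : Type*} [Group G] [Fintype G] [MulAction G X]
    (rel : X → X → Prop) (hrel : Equivalence rel) [DecidableRel rel]
    (t k : ℕ) (ht : 0 < t)
    -- `t ≤ |S|`, the number of equivalence classes
    (htS : t ≤ Nat.card (Quotient (⟨rel, hrel⟩ : Setoid X)))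
    -- (a) `~` is `G`-invariant
    (ha : ∀ (g : G) (x y : X), rel x y → rel (g • x) (g • y))
    -- (c₁) `G` is transitive on the `~`-transversal `t`-tuples
    (hc : ∀ y y' : Fin t → X,
      (∀ i j : Fin t, i ≠ j → ¬rel (y i) (y j)) →
      (∀ i j : Fin t, i ≠ j → ¬rel (y' i) (y' j)) →
        ∃ g : G, ∀ i : Fin t, g • y i = y' i)
    -- the base block
    (B₀ : Finset X) (hB₀ : ∀ x ∈ B₀, ∀ y ∈ B₀, rel x y → x = y)
    (hB₀k : B₀.card = k) (htk : t ≤ k) :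
    ∃ s : ℕ,
      -- all equivalence classes have the same cardinality `s`
      (∀ x : X, (Finset.univ.filter (fun y => rel x y)).card = s) ∧
      ∀ lt : ℕ,
        lt * (Fintype.card X / s).choose t * s ^ t *
            Nat.card {g : G // B₀.image (fun x => g • x) = B₀} =
          Nat.card G * k.choose t →
        (0 < lt ∧
          (∀ B ∈ Finset.univ.image (fun g : G => B₀.image (fun x => g • x)),
            (∀ x ∈ B, ∀ y ∈ B, rel x y → x = y) ∧ B.card = k) ∧
          (∀ Y : Finset X, (∀ x ∈ Y, ∀ y ∈ Y, rel x y → x = y) → Y.card = t →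
            ((Finset.univ.image (fun g : G => B₀.image (fun x => g • x))).filter
              (fun B => Y ⊆ B)).card = lt) ∧
          t ≤ Fintype.card X / s) := by
  classical
  let r : Setoid X := ⟨rel, hrel⟩
  let π : X → Quotient r := Quotient.mk r
  have hπ : ∀ x y, π x = π y ↔ rel x y := fun x y => Quotient.eq (r := r)
  have ha' : ∀ (g : G) (x y : X), rel (g • x) (g • y) ↔ rel x y := by
    refine fun g x y => ⟨fun h => ?_, ha g x y⟩
    simpa using ha g⁻¹ _ _ h
  have hcardS : t ≤ Fintype.card (Quotient r) := by
    rw [← Nat.card_eq_fintype_card]; exact htS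
  obtain ⟨e⟩ : Nonempty (Fin t ↪ Quotient r) :=
    Function.Embedding.nonempty_of_card_le (by simpa using hcardS)
  let i₀ : Fin t := ⟨0, ht⟩
  -- Relabel the chosen classes so that the first is the class of `x`, and take representatives
  -- with `x` representing its own class.
  have htuple : ∀ x : X, ∃ y : Fin t → X, y i₀ = x ∧ ∀ i j, i ≠ j → ¬ rel (y i) (y j) := by
    intro x
    let σ : Quotient r → X := Function.update Quotient.out (π x) x
    have hσ : ∀ q, π (σ q) = q := by
      intro q
      by_cases h : q = π x
      · subst h; simp [σ]
      · simp only [σ, Function.update_of_ne h]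
        exact Quotient.out_eq q
    refine ⟨fun i => σ (Equiv.swap (e i₀) (π x) (e i)), by simp [σ], ?_⟩
    intro i j hij h
    rw [← hπ, hσ, hσ] at h
    exact hij (e.injective ((Equiv.swap _ _).injective h))
  have htrans : ∀ x y : X, ∃ g : G, g • x = y := by
    intro x y
    obtain ⟨u, hu, hu'⟩ := htuple x
    obtain ⟨w, hw, hw'⟩ := htuple y
    obtain ⟨g, hg⟩ := hc u w hu' hw'
    exact ⟨g, by rw [← hu, ← hw, hg]⟩
  obtain ⟨x₀⟩ : Nonempty X := ⟨(e i₀).out⟩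
  set s := (univ.filter (fun y => rel x₀ y)).card with hsdef
  have hclass : ∀ x : X, (univ.filter (fun y => rel x y)).card = s := by
    intro x
    obtain ⟨g, rfl⟩ := htrans x₀ x
    symm
    refine card_bij (fun y _ => g • y) ?_ ?_ ?_
    · intro y hy
      simpa [ha'] using hy
    · intro y _ z _ h
      exact smul_left_cancel g h
    · intro y hy
      refine ⟨g⁻¹ • y, ?_, smul_inv_smul g y⟩
      rw [mem_filter] at hy ⊢
      refine ⟨mem_univ _, ?_⟩
      rw [← ha' g, smul_inv_smul]
      exact hy.2
  have hspos : 0 < s := card_pos.2 ⟨x₀, by simp [hrel.refl x₀]⟩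
  have hfib : ∀ q : Quotient r, (univ.filter (fun x => π x = q)).card = s := by
    intro q
    obtain ⟨x, rfl⟩ := Quotient.exists_rep q
    rw [← hclass x]
    congr 1
    ext y
    simp only [mem_filter, mem_univ, true_and]
    exact (hπ y x).trans ⟨hrel.symm, hrel.symm⟩
  have hv : Fintype.card X / s = Fintype.card (Quotient r) := by
    have h : Fintype.card X = Fintype.card (Quotient r) * s := by
      rw [← card_univ, card_eq_sum_card_fiberwise (f := π) (t := univ)
          (fun _ _ => mem_coe.2 (mem_univ _)),
        sum_congr rfl (fun q _ => hfib q), sum_const, card_univ, smul_eq_mul]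
    rw [h, Nat.mul_div_cancel _ hspos]
  have htr : ∀ Y : Finset X, Set.InjOn π Y ↔ ∀ x ∈ Y, ∀ y ∈ Y, rel x y → x = y := by
    intro Y
    simp only [Set.InjOn, hπ, mem_coe]
  refine ⟨s, hclass, fun lt hlt => ?_⟩
  set O : Finset (Finset X) := univ.image (fun g : G => B₀.image (fun x => g • x)) with hOdef
  have hOmem : ∀ B, B ∈ O ↔ ∃ g : G, g • B₀ = B := by
    intro B
    simp only [hOdef, mem_image, mem_univ, true_and, smul_finset_def]
  have hO : ∀ (g : G), ∀ B ∈ O, g • B ∈ O := by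
    intro g B hB
    obtain ⟨g', rfl⟩ := (hOmem B).1 hB
    exact (hOmem _).2 ⟨g * g', mul_smul _ _ _⟩
  have hblock : ∀ B ∈ O, (∀ x ∈ B, ∀ y ∈ B, rel x y → x = y) ∧ B.card = k := by
    intro B hB
    obtain ⟨g, rfl⟩ := (hOmem B).1 hB
    refine ⟨?_, by rw [card_smul_finset, hB₀k]⟩
    intro x hx y hy hxy
    obtain ⟨x', hx', rfl⟩ := mem_smul_finset.1 hx
    obtain ⟨y', hy', rfl⟩ := mem_smul_finset.1 hy
    rw [hB₀ x' hx' y' hy' ((ha' g x' y').1 hxy)]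
  have horb : O.card * Nat.card {g : G // B₀.image (fun x => g • x) = B₀} = Nat.card G := by
    have h := MulAction.card_orbit_mul_card_stabilizer_eq_card_group G B₀
    have h1 : O.card = Fintype.card (MulAction.orbit G B₀) := by
      rw [← Set.toFinset_card]
      congr 1
      ext B
      rw [hOmem, Set.mem_toFinset]
      rfl
    rw [Nat.card_eq_fintype_card (α := G), ← h, h1,
      ← Nat.card_eq_fintype_card (α := MulAction.stabilizer G B₀)]
    rfl
  have hhom : ∀ Y Y' : Finset X, Set.InjOn π Y → Y.card = t → Set.InjOn π Y' → Y'.card = t →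
      (O.filter (fun B => Y' ⊆ B)).card = (O.filter (fun B => Y ⊆ B)).card := by
    intro Y Y' hY hYt hY' hYt'
    let u := (Y.equivFinOfCardEq hYt).symm
    let w := (Y'.equivFinOfCardEq hYt').symm
    obtain ⟨g, hg⟩ := hc (fun i => u i) (fun i => w i)
      (fun i j hij h => hij (u.injective (Subtype.ext (hY (u i).2 (u j).2 ((hπ _ _).2 h)))))
      (fun i j hij h => hij (w.injective (Subtype.ext (hY' (w i).2 (w j).2 ((hπ _ _).2 h)))))
    have hsub : g • Y ⊆ Y' := by
      intro z hz
      obtain ⟨y, hy, rfl⟩ := mem_smul_finset.1 hz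
      have := hg (u.symm ⟨y, hy⟩)
      simp only [Equiv.apply_symm_apply] at this
      rw [this]
      exact (w _).2
    have hgY : g • Y = Y' := eq_of_subset_of_card_le hsub (by rw [card_smul_finset, hYt, hYt'])
    rw [← hgY, card_blocks_smul O hO]
  set T : Finset (Finset X) := univ.filter (fun Y => Set.InjOn π Y ∧ Y.card = t) with hTdef
  have hTmem : ∀ Y, Y ∈ T ↔ Set.InjOn π Y ∧ Y.card = t := by simp [hTdef]
  have hTcard := card_transversals π s t hfib T hTmem
  have hchoose : 0 < (Fintype.card (Quotient r)).choose t := Nat.choose_pos hcardS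
  have hGpos : 0 < Nat.card G := Nat.card_pos
  have hstab : 0 < Nat.card {g : G // B₀.image (fun x => g • x) = B₀} :=
    Nat.pos_of_mul_pos_left (horb ▸ hGpos)
  have hdc : ∑ Y ∈ T, (O.filter (fun B => Y ⊆ B)).card = O.card * k.choose t := by
    -- Interchange the order of summation over incident pairs `(Y, B)`.
    have h := sum_card_bipartiteAbove_eq_sum_card_bipartiteBelow (s := T) (t := O)
      (fun Y B : Finset X => Y ⊆ B)
    simp only [bipartiteAbove, bipartiteBelow] at h
    rw [h, ← smul_eq_mul, ← sum_const]
    refine sum_congr rfl fun B hB => ?_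
    obtain ⟨hB1, hB2⟩ := hblock B hB
    rw [← hB2, ← card_powersetCard]
    congr 1
    ext Y
    rw [mem_filter, hTmem, mem_powersetCard]
    exact ⟨fun h => ⟨h.2, h.1.2⟩,
      fun h => ⟨⟨((htr B).2 hB1).mono (coe_subset.2 h.1), h.2⟩, h.1⟩⟩
  rw [hv] at hlt ⊢
  refine ⟨?_, hblock, ?_, hcardS⟩
  · rw [Nat.pos_iff_ne_zero]
    rintro rfl
    have : 0 < Nat.card G * k.choose t := Nat.mul_pos hGpos (Nat.choose_pos htk)
    simp only [zero_mul] at hlt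
    omega
  · intro Y hY hYt
    have hY' := (htr Y).2 hY
    rw [sum_congr rfl (fun Z hZ => hhom Y Z hY' hYt ((hTmem Z).1 hZ).1 ((hTmem Z).1 hZ).2),
      sum_const, hTcard, smul_eq_mul] at hdc
    rw [← horb] at hlt
    set n := (O.filter (fun B => Y ⊆ B)).card
    set m := Nat.card {g : G // B₀.image (fun x => g • x) = B₀}
    set c := (Fintype.card (Quotient r)).choose t
    have hpos : 0 < c * s ^ t * m := by positivity
    refine Nat.eq_of_mul_eq_mul_right hpos ?_
    calc n * (c * s ^ t * m) = (c * s ^ t * n) * m := by ring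
      _ = O.card * k.choose t * m := by rw [hdc]
      _ = O.card * m * k.choose t := by ring
      _ = lt * (c * s ^ t * m) := by rw [← hlt]; ring
end

section
/- Let R be a ring and let (a,b), (a',b') ∈ R² be admissible pairs. Then the left submodules R(a,b) and R(a',b') of R² are equal if and only if there exists a unit u ∈ R* with (a',b') = (ua, ub). -/
/-!
An admissible pair `(a,b)` satisfies `a * c + b * d = 1` for some `c`, `d`, so its left annihilator
is trivial. If two such pairs generate the same submodule, each is a left multiple of the other,
say by `x` and `y`; then `y * x` fixes one pair and `x * y` the other, so both products are `1`
by `Admissible.eq_one_of_mul_eq`. The converse direction holds for arbitrary pairs.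
-/

/-- A pair `(a,b) ∈ R²` is admissible if it is the first row of an invertible 2×2 matrix. -/
def Admissible (R : Type*) [Ring R] (a b : R) : Prop :=
  ∃ γ : (Matrix (Fin 2) (Fin 2) R)ˣ, γ.val 0 0 = a ∧ γ.val 0 1 = b

/-- The projective line over `R`: cyclic left submodules `R(a,b)` with `(a,b)` admissible. -/
def ProjPoint (R : Type*) [Ring R] : Set (Submodule R (R × R)) :=
  {p | ∃ a b : R, Admissible R a b ∧ p = Submodule.span R {(a, b)}}

/-- Two points are distant if some admissible representatives of them are the two rows of an
invertible 2×2 matrix. -/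
def Distant (R : Type*) [Ring R] (p q : Submodule R (R × R)) : Prop :=
  ∃ γ : (Matrix (Fin 2) (Fin 2) R)ˣ,
    p = Submodule.span R {(γ.val 0 0, γ.val 0 1)} ∧
    q = Submodule.span R {(γ.val 1 0, γ.val 1 1)}

/-- Right multiplication of a row vector by a matrix, as a left `R`-linear map. -/
def rowMul (R : Type*) [Ring R] (γ : Matrix (Fin 2) (Fin 2) R) : (R × R) →ₗ[R] (R × R) where
  toFun v := (v.1 * γ 0 0 + v.2 * γ 1 0, v.1 * γ 0 1 + v.2 * γ 1 1)
  map_add' x y := by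
    simp only [Prod.fst_add, Prod.snd_add, add_mul, Prod.mk_add_mk, Prod.mk.injEq]
    constructor <;> abel
  map_smul' c v := by
    simp only [Prod.smul_fst, Prod.smul_snd, smul_eq_mul, RingHom.id_apply, Prod.smul_mk,
      mul_add, mul_assoc]

/-- The action of `GL₂(R)` on the projective line: `R(a,b)·γ = R((a,b)·γ)`. -/
def ptAct (R : Type*) [Ring R] (γ : (Matrix (Fin 2) (Fin 2) R)ˣ)
    (p : Submodule R (R × R)) : Submodule R (R × R) :=
  p.map (rowMul R γ.val)

/-- The standard chain: image of `P(K)` in `P(R)` under the embedding induced by `f`. -/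
def StdChain (K R : Type*) [DivisionRing K] [Ring R] (f : K →+* R) :
    Set (Submodule R (R × R)) :=
  {p | ∃ a b : K, Admissible K a b ∧ p = Submodule.span R {(f a, f b)}}

/-- A `K`-chain: an image of the standard chain under an element of `GL₂(R)`. -/
def IsKChain (K R : Type*) [DivisionRing K] [Ring R] (f : K →+* R)
    (C : Set (Submodule R (R × R))) : Prop :=
  ∃ γ : (Matrix (Fin 2) (Fin 2) R)ˣ, C = (ptAct R γ) '' StdChain K R f

/-- An admissible pair has a right inverse as a row vector: the first column of the inverse matrix.
Hence `x ↦ x(a,b)` is injective. -/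
theorem Admissible.exists_mul_add_mul_eq_one {R : Type*} [Ring R] {a b : R}
    (h : Admissible R a b) : ∃ c d : R, a * c + b * d = 1 := by
  obtain ⟨γ, rfl, rfl⟩ := h
  refine ⟨γ.inv 0 0, γ.inv 1 0, ?_⟩
  have := congrFun (congrFun γ.val_inv 0) 0
  simpa [Matrix.mul_apply, Fin.sum_univ_two] using this

/-- Left multiplication is free on an admissible pair: only `1` fixes it. -/
theorem Admissible.eq_one_of_mul_eq {R : Type*} [Ring R] {a b x : R}
    (h : Admissible R a b) (ha : x * a = a) (hb : x * b = b) : x = 1 := by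
  obtain ⟨c, d, hcd⟩ := h.exists_mul_add_mul_eq_one
  calc x = x * (a * c + b * d) := by rw [hcd, mul_one]
    _ = a * c + b * d := by rw [mul_add, ← mul_assoc, ← mul_assoc, ha, hb]
    _ = 1 := hcd

/-- Two admissible pairs generate the same point of the projective line iff they differ by a
left multiplication with a unit. -/
theorem stmt_3 {R : Type*} [Ring R] (a b a' b' : R)
    (h : Admissible R a b) (h' : Admissible R a' b') :
    Submodule.span R {((a, b) : R × R)} = Submodule.span R {((a', b') : R × R)} ↔
      ∃ u : Rˣ, a' = (u : R) * a ∧ b' = (u : R) * b := by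
  constructor
  · intro e
    have h1 : (a', b') ∈ Submodule.span R {((a, b) : R × R)} :=
      e ▸ Submodule.mem_span_singleton_self _
    have h2 : (a, b) ∈ Submodule.span R {((a', b') : R × R)} :=
      e ▸ Submodule.mem_span_singleton_self _
    obtain ⟨x, hx⟩ := Submodule.mem_span_singleton.1 h1
    obtain ⟨y, hy⟩ := Submodule.mem_span_singleton.1 h2
    simp only [Prod.smul_mk, smul_eq_mul, Prod.mk.injEq] at hx hy
    have hyx : y * x = 1 := h.eq_one_of_mul_eq
      (by rw [mul_assoc, hx.1, hy.1]) (by rw [mul_assoc, hx.2, hy.2])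
    have hxy : x * y = 1 := h'.eq_one_of_mul_eq
      (by rw [mul_assoc, hy.1, hx.1]) (by rw [mul_assoc, hy.2, hx.2])
    exact ⟨⟨x, y, hxy, hyx⟩, hx.1.symm, hx.2.symm⟩
  · rintro ⟨u, rfl, rfl⟩
    exact (Submodule.span_singleton_group_smul_eq R u ((a, b) : R × R)).symm
end

section
/- Let R be a ring. The group GL₂(R) acts transitively on the set of triples of mutually distant points of the projective line P(R): given points p, q, r ∈ P(R) that are mutually distant and points p', q', r' ∈ P(R) that are mutually distant, there exists γ ∈ GL₂(R) with p·γ = p', q·γ = q', r·γ = r'. -/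
theorem rowMul_mul {R : Type*} [Ring R] (A B : Matrix (Fin 2) (Fin 2) R) :
    rowMul R (A * B) = rowMul R B ∘ₗ rowMul R A := by
  refine LinearMap.ext fun v => Prod.ext ?_ ?_ <;>
    simp [rowMul, Matrix.mul_apply, Fin.sum_univ_two, mul_add, add_mul, mul_assoc] <;> abel

theorem rowMul_one {R : Type*} [Ring R] :
    rowMul R (1 : Matrix (Fin 2) (Fin 2) R) = LinearMap.id := by
  refine LinearMap.ext fun v => Prod.ext ?_ ?_ <;> simp [rowMul]

theorem ptAct_mul {R : Type*} [Ring R] (γ δ : (Matrix (Fin 2) (Fin 2) R)ˣ)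
    (p : Submodule R (R × R)) : ptAct R (γ * δ) p = ptAct R δ (ptAct R γ p) := by
  simp only [ptAct, Units.val_mul, rowMul_mul, Submodule.map_comp]

theorem ptAct_inv_ptAct {R : Type*} [Ring R] (γ : (Matrix (Fin 2) (Fin 2) R)ˣ)
    (p : Submodule R (R × R)) : ptAct R γ⁻¹ (ptAct R γ p) = p := by
  rw [← ptAct_mul, mul_inv_cancel]
  simp [ptAct, rowMul_one]

theorem rowMul_eq {R : Type*} [Ring R] (A : Matrix (Fin 2) (Fin 2) R) (s t : R) :
    rowMul R A (s, t) = s • (A 0 0, A 0 1) + t • (A 1 0, A 1 1) := by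
  simp [rowMul]

theorem rows_span {R : Type*} [Ring R] (γ : (Matrix (Fin 2) (Fin 2) R)ˣ) (z : R × R) :
    ∃ s t : R, z = s • (γ.val 0 0, γ.val 0 1) + t • (γ.val 1 0, γ.val 1 1) := by
  refine ⟨(rowMul R γ⁻¹.val z).1, (rowMul R γ⁻¹.val z).2, ?_⟩
  rw [← rowMul_eq, Prod.mk.eta, ← LinearMap.comp_apply, ← rowMul_mul, Units.inv_mul, rowMul_one]
  rfl

theorem rows_indep {R : Type*} [Ring R] (γ : (Matrix (Fin 2) (Fin 2) R)ˣ) (s t : R)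
    (h : s • (γ.val 0 0, γ.val 0 1) + t • (γ.val 1 0, γ.val 1 1) = 0) : s = 0 ∧ t = 0 := by
  rw [← rowMul_eq] at h
  have h2 : rowMul R γ⁻¹.val (rowMul R γ.val (s, t)) = 0 := by rw [h, map_zero]
  rw [← LinearMap.comp_apply, ← rowMul_mul, Units.mul_inv, rowMul_one] at h2
  simpa using h2

theorem Distant.isCompl {R : Type*} [Ring R] {p q : Submodule R (R × R)}
    (h : Distant R p q) : IsCompl p q := by
  obtain ⟨γ, rfl, rfl⟩ := h
  constructor
  · rw [Submodule.disjoint_def]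
    intro z hz hz'
    obtain ⟨s, rfl⟩ := Submodule.mem_span_singleton.1 hz
    obtain ⟨t, ht⟩ := Submodule.mem_span_singleton.1 hz'
    have := (rows_indep γ s (-t) (by rw [neg_smul, ht, add_neg_cancel])).1
    rw [this, zero_smul]
  · rw [codisjoint_iff, eq_top_iff]
    intro z _
    obtain ⟨s, t, rfl⟩ := rows_span γ z
    exact Submodule.add_mem_sup
      (Submodule.smul_mem _ _ (Submodule.mem_span_singleton_self _))
      (Submodule.smul_mem _ _ (Submodule.mem_span_singleton_self _))

/-- Spanning gives a left inverse `t` of `y`. It is also a right inverse, because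
`(y t - 1) w` has no `v₂`-component and so lies in `R v₁ ∩ R w = 0`. -/
theorem isUnit_coeff {R M : Type*} [Ring R] [AddCommGroup M] [Module R M] {v₁ v₂ w : M} {x y : R}
    (hv : ∀ s t : R, s • v₁ + t • v₂ = 0 → s = 0 ∧ t = 0)
    (hw : ∀ s : R, s • w = 0 → s = 0) (h : w = x • v₁ + y • v₂)
    (hc : IsCompl (Submodule.span R {v₁}) (Submodule.span R {w})) : IsUnit y := by
  have hmem : v₂ ∈ Submodule.span R {v₁} ⊔ Submodule.span R {w} := by
    rw [hc.sup_eq_top]; trivial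
  obtain ⟨a, ha, b, hb, hab⟩ := Submodule.mem_sup.1 hmem
  obtain ⟨s, rfl⟩ := Submodule.mem_span_singleton.1 ha
  obtain ⟨t, rfl⟩ := Submodule.mem_span_singleton.1 hb
  have hty : t * y = 1 := by
    refine sub_eq_zero.1 (hv (s + t * x) (t * y - 1) ?_).2
    rw [h] at hab
    rw [← sub_eq_zero.2 hab]
    simp only [add_smul, sub_smul, smul_add, mul_smul, one_smul]
    abel
  have hyt : y * t = 1 := by
    refine sub_eq_zero.1 (hw _ ?_)
    refine Submodule.disjoint_def.1 hc.disjoint _ ?_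
      (Submodule.smul_mem _ _ (Submodule.mem_span_singleton_self _))
    have h0 : (y * t - 1) * y = 0 := by rw [sub_mul, mul_assoc, hty, mul_one, one_mul, sub_self]
    rw [h, smul_add, smul_smul, smul_smul, h0, zero_smul, add_zero]
    exact Submodule.smul_mem _ _ (Submodule.mem_span_singleton_self _)
  exact ⟨⟨y, t, hyt, hty⟩, rfl⟩

theorem span_unit_smul {R M : Type*} [Ring R] [AddCommGroup M] [Module R M] (u : Rˣ) (v : M) :
    Submodule.span R {(u : R) • v} = Submodule.span R {v} :=
  Submodule.span_singleton_group_smul_eq R u v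

/-- Mutually distant points are the image of the standard triple `R(1,0), R(0,1), R(1,1)`. -/
theorem exists_standard {R : Type*} [Ring R] {p q r : Submodule R (R × R)}
    (hpq : Distant R p q) (hpr : Distant R p r) (hqr : Distant R q r) :
    ∃ γ : (Matrix (Fin 2) (Fin 2) R)ˣ,
      ptAct R γ (Submodule.span R {(1, 0)}) = p ∧ ptAct R γ (Submodule.span R {(0, 1)}) = q ∧
        ptAct R γ (Submodule.span R {(1, 1)}) = r := by
  have cpr := hpr.isCompl
  have cqr := hqr.isCompl
  obtain ⟨γ, hp, hq⟩ := hpq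
  obtain ⟨δ, -, hr⟩ := hpr
  have hw : ∀ s : R, s • (δ.val 1 0, δ.val 1 1) = 0 → s = 0 := fun s hs =>
    (rows_indep δ 0 s (by rw [hs, zero_smul, add_zero])).2
  obtain ⟨x, y, hxy⟩ := rows_span γ (δ.val 1 0, δ.val 1 1)
  have hy : IsUnit y := isUnit_coeff (rows_indep γ) hw hxy (by rwa [← hp, ← hr])
  have hx : IsUnit x := isUnit_coeff
    (fun s t h => (rows_indep γ t s (by rwa [add_comm])).symm) hw (hxy.trans (add_comm _ _))
    (by rwa [← hq, ← hr])
  obtain ⟨u, rfl⟩ := hx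
  obtain ⟨v, rfl⟩ := hy
  let D : (Matrix (Fin 2) (Fin 2) R)ˣ :=
    ⟨Matrix.diagonal ![(u : R), v], Matrix.diagonal ![((u⁻¹ : Rˣ) : R), ((v⁻¹ : Rˣ) : R)],
      by rw [Matrix.diagonal_mul_diagonal, ← Matrix.diagonal_one]
         congr 1; funext i; fin_cases i <;> simp,
      by rw [Matrix.diagonal_mul_diagonal, ← Matrix.diagonal_one]
         congr 1; funext i; fin_cases i <;> simp⟩
  have hD : ∀ s t : R, rowMul R (D * γ).val (s, t) =
      s • ((u : R) • (γ.val 0 0, γ.val 0 1)) + t • ((v : R) • (γ.val 1 0, γ.val 1 1)) := by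
    intro s t
    rw [rowMul_eq]
    simp [D]
  refine ⟨D * γ, ?_, ?_, ?_⟩
  · rw [ptAct, Submodule.map_span, Set.image_singleton, hD, one_smul, zero_smul, add_zero,
      span_unit_smul, hp]
  · rw [ptAct, Submodule.map_span, Set.image_singleton, hD, one_smul, zero_smul, zero_add,
      span_unit_smul, hq]
  · rw [ptAct, Submodule.map_span, Set.image_singleton, hD, one_smul, one_smul, ← hxy, hr]

/-- `GL₂(R)` acts transitively on triples of mutually distant points of the projective line. -/
theorem stmt_4 {R : Type*} [Ring R] (p q r p' q' r' : Submodule R (R × R))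
    (hpq : Distant R p q) (hpr : Distant R p r) (hqr : Distant R q r)
    (hpq' : Distant R p' q') (hpr' : Distant R p' r') (hqr' : Distant R q' r') :
    ∃ γ : (Matrix (Fin 2) (Fin 2) R)ˣ,
      ptAct R γ p = p' ∧ ptAct R γ q = q' ∧ ptAct R γ r = r' := by
  obtain ⟨γ, rfl, rfl, rfl⟩ := exists_standard hpq hpr hqr
  obtain ⟨δ, rfl, rfl, rfl⟩ := exists_standard hpq' hpr' hqr'
  exact ⟨γ⁻¹ * δ, by simp only [ptAct_mul, ptAct_inv_ptAct, and_self]⟩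
end

section
/- Let R be a ring. The following statements are equivalent: (a) every matrix γ ∈ GL₂(R) that fixes the three points R(1,0), R(0,1), R(1,1) of P(R) fixes every point of P(R) (equivalently, the projective group PGL₂(R) acts sharply transitively on the set of triples of mutually distant points of P(R)); (b) every unit of R lies in the centre of R, i.e. R* ⊆ Z(R). -/
theorem ptAct_span_singleton {R : Type*} [Ring R] (γ : (Matrix (Fin 2) (Fin 2) R)ˣ) (a b : R) :
    ptAct R γ (Submodule.span R {(a, b)}) =
      Submodule.span R {(a * γ.val 0 0 + b * γ.val 1 0, a * γ.val 0 1 + b * γ.val 1 1)} := by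
  simp [ptAct, Submodule.map_span, rowMul]

theorem span_unit_mul {R : Type*} [Ring R] {u : R} (hu : IsUnit u) (a b : R) :
    Submodule.span R {(u * a, u * b)} = Submodule.span R {(a, b)} :=
  Submodule.span_singleton_smul_eq hu (a, b)

theorem exists_of_span_eq {R : Type*} [Ring R] {a b c d : R}
    (h : Submodule.span R {(a, b)} = Submodule.span R {(c, d)}) :
    ∃ r : R, r * c = a ∧ r * d = b := by
  have hm : (a, b) ∈ Submodule.span R {(c, d)} := h ▸ Submodule.mem_span_singleton_self _
  simpa [Submodule.mem_span_singleton] using hm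

/-- Every matrix of `GL₂(R)` fixing `R(1,0)`, `R(0,1)`, `R(1,1)` fixes all points of `P(R)`
iff all units of `R` are central. -/
theorem stmt_6 {R : Type*} [Ring R] :
    (∀ γ : (Matrix (Fin 2) (Fin 2) R)ˣ,
      (ptAct R γ (Submodule.span R {((1, 0) : R × R)}) = Submodule.span R {((1, 0) : R × R)} ∧
       ptAct R γ (Submodule.span R {((0, 1) : R × R)}) = Submodule.span R {((0, 1) : R × R)} ∧
       ptAct R γ (Submodule.span R {((1, 1) : R × R)}) = Submodule.span R {((1, 1) : R × R)}) →
        ∀ p ∈ ProjPoint R, ptAct R γ p = p) ↔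
      (∀ u : Rˣ, ∀ x : R, (u : R) * x = x * (u : R)) := by
  constructor
  · intro h u x
    let D : (Matrix (Fin 2) (Fin 2) R)ˣ := Units.map (Matrix.scalar (Fin 2)).toMonoidHom u
    have h00 : D.val 0 0 = u := by simp [D]
    have h01 : D.val 0 1 = 0 := by simp [D]
    have h10 : D.val 1 0 = 0 := by simp [D]
    have h11 : D.val 1 1 = u := by simp [D]
    have hp : Submodule.span R {((1, x) : R × R)} ∈ ProjPoint R :=
      ⟨1, x, ⟨⟨!![1, x; 0, 1], !![1, -x; 0, 1], by simp [Matrix.one_fin_two],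
        by simp [Matrix.one_fin_two]⟩, by simp, by simp⟩, rfl⟩
    have key := h D ⟨?_, ?_, ?_⟩ _ hp
    · rw [ptAct_span_singleton, h00, h01, h10, h11] at key
      obtain ⟨r, hr1, hr2⟩ := exists_of_span_eq key
      simp only [mul_one, one_mul, mul_zero, add_zero, zero_add] at hr1 hr2
      rw [← hr2, hr1]
    · simpa [ptAct_span_singleton, h00, h01, h10, h11] using span_unit_mul u.isUnit 1 0
    · simpa [ptAct_span_singleton, h00, h01, h10, h11] using span_unit_mul u.isUnit 0 1
    · simpa [ptAct_span_singleton, h00, h01, h10, h11] using span_unit_mul u.isUnit 1 1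
  · rintro h γ ⟨h1, h2, h3⟩ p ⟨a, b, -, rfl⟩
    rw [ptAct_span_singleton] at h1 h2 h3
    obtain ⟨_, -, h01⟩ := exists_of_span_eq h1
    obtain ⟨_, h10, -⟩ := exists_of_span_eq h2
    obtain ⟨_, e1, e2⟩ := exists_of_span_eq h3
    simp only [mul_one, one_mul, mul_zero, zero_mul, add_zero, zero_add] at h01 h10 e1 e2
    rw [← h10, add_zero] at e1
    rw [← h01, zero_add] at e2
    have h11 : γ.val 1 1 = γ.val 0 0 := e2.symm.trans e1
    have hl : γ.val 0 0 * γ.inv 0 0 = 1 := by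
      simpa [Matrix.mul_apply, Fin.sum_univ_two, ← h01] using congrFun (congrFun γ.val_inv 0) 0
    have hr : γ.inv 0 0 * γ.val 0 0 = 1 := by
      simpa [Matrix.mul_apply, Fin.sum_univ_two, ← h10] using congrFun (congrFun γ.inv_val 0) 0
    let u : Rˣ := ⟨γ.val 0 0, γ.inv 0 0, hl, hr⟩
    have hc : ∀ x, γ.val 0 0 * x = x * γ.val 0 0 := h u
    rw [ptAct_span_singleton, ← h01, ← h10, h11, mul_zero, mul_zero, add_zero, zero_add,
      ← hc, ← hc]
    exact span_unit_mul u.isUnit a b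
end

section
/- Let R be a ring containing a (possibly skew) field K as a subring with the same unit element. Then the mapping P(K) → P(R), K(k,l) ↦ R(k,l), is well defined (if (a,b), (c,d) ∈ K² are admissible over K and K(a,b) = K(c,d), then R(a,b) = R(c,d)), and it takes distinct points of P(K) to distant points of P(R): if K(a,b) ≠ K(c,d) then R(a,b) △ R(c,d). -/
/-- The lower triangular matrix with rows `(1,0)` and `(s,t)` as a unit, for `t ≠ 0`. -/
def lowerUnit {K : Type*} [DivisionRing K] (s t : K) (ht : t ≠ 0) :
    (Matrix (Fin 2) (Fin 2) K)ˣ where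
  val := !![1, 0; s, t]
  inv := !![1, 0; -(t⁻¹ * s), t⁻¹]
  val_inv := by
    ext i j
    fin_cases i <;> fin_cases j <;> simp [Matrix.mul_apply, ht]
  inv_val := by
    ext i j
    fin_cases i <;> fin_cases j <;> simp [Matrix.mul_apply, ht]

theorem span_map_le {K R : Type*} [DivisionRing K] [Ring R] (f : K →+* R) {a b c d : K}
    (h : Submodule.span K {((a, b) : K × K)} ≤ Submodule.span K {((c, d) : K × K)}) :
    Submodule.span R {((f a, f b) : R × R)} ≤ Submodule.span R {((f c, f d) : R × R)} := by
  obtain ⟨k, hk⟩ := Submodule.mem_span_singleton.1 (h (Submodule.mem_span_singleton_self _))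
  simp only [Prod.smul_mk, smul_eq_mul, Prod.mk.injEq] at hk
  rw [Submodule.span_singleton_le_iff_mem, Submodule.mem_span_singleton]
  exact ⟨f k, by simp [← hk.1, ← hk.2]⟩

/-- Over a division ring, admissible pairs spanning distinct points are the rows of an invertible
matrix. -/
theorem exists_unit_of_span_ne {K : Type*} [DivisionRing K] {a b c d : K}
    (hab : Admissible K a b) (hcd : Admissible K c d)
    (hne : Submodule.span K {((a, b) : K × K)} ≠ Submodule.span K {((c, d) : K × K)}) :
    ∃ γ : (Matrix (Fin 2) (Fin 2) K)ˣ, γ.val = !![a, b; c, d] := by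
  obtain ⟨γ, rfl, rfl⟩ := hab
  obtain ⟨δ, rfl, rfl⟩ := hcd
  obtain ⟨μ, rfl⟩ : ∃ μ, δ = μ * γ := ⟨δ * γ⁻¹, by simp⟩
  have ht : μ.val 0 1 ≠ 0 := by
    intro ht
    have hs : μ.val 0 0 ≠ 0 := by
      intro hs
      have h := congrFun (congrFun μ.mul_inv 0) 0
      simp [Matrix.mul_apply, hs, ht] at h
    apply hne
    rw [← Submodule.span_singleton_smul_eq hs.isUnit]
    simp [Matrix.mul_apply, ht]
  refine ⟨lowerUnit (μ.val 0 0) (μ.val 0 1) ht * γ, ?_⟩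
  ext i j
  fin_cases i <;> fin_cases j <;> simp [lowerUnit, Matrix.mul_apply]

/-- The mapping `P(K) → P(R)`, `K(a,b) ↦ R(a,b)` is well defined and takes distinct points
of `P(K)` to distant points of `P(R)`. -/
theorem stmt_8 {K R : Type*} [DivisionRing K] [Ring R] (f : K →+* R) :
    (∀ a b c d : K, Admissible K a b → Admissible K c d →
      Submodule.span K {((a, b) : K × K)} = Submodule.span K {((c, d) : K × K)} →
        Submodule.span R {((f a, f b) : R × R)} = Submodule.span R {((f c, f d) : R × R)}) ∧
    (∀ a b c d : K, Admissible K a b → Admissible K c d →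
      Submodule.span K {((a, b) : K × K)} ≠ Submodule.span K {((c, d) : K × K)} →
        Distant R (Submodule.span R {((f a, f b) : R × R)})
          (Submodule.span R {((f c, f d) : R × R)})) := by
  refine ⟨fun a b c d _ _ h => le_antisymm (span_map_le f h.le) (span_map_le f h.ge), ?_⟩
  intro a b c d hab hcd hne
  obtain ⟨γ, hγ⟩ := exists_unit_of_span_ne hab hcd hne
  exact ⟨Units.map (f.mapMatrix : Matrix (Fin 2) (Fin 2) K →+* _).toMonoidHom γ,
    by simp [hγ], by simp [hγ]⟩
end

section
/- Let R be a ring containing a (possibly skew) field K as a subring with the same unit element, and let N := {n ∈ R* : n⁻¹K*n = K*} be the normaliser of K* in the group of units R*. Then: (a) for any three mutually distant points p, q, r ∈ P(R), the set of K-chains containing {p,q,r} is in bijection with the set {N·r : r ∈ R*} of right cosets of N in R*; (b) there is exactly one K-chain through any three mutually distant points of P(R) if, and only if, K* is a normal subgroup of R*. -/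
/-- The image of `K* = K \ {0}` in `R`. -/
def Kstar (K R : Type*) [DivisionRing K] [Ring R] (f : K →+* R) : Set R :=
  {x | ∃ k : K, k ≠ 0 ∧ f k = x}

/-- The normaliser `N = {n ∈ R* : n⁻¹ K* n = K*}` of `K*` in `R*`. -/
def NormaliserKstar (K R : Type*) [DivisionRing K] [Ring R] (f : K →+* R) : Set Rˣ :=
  {n | (fun x => ((n⁻¹ : Rˣ) : R) * x * (n : R)) '' Kstar K R f = Kstar K R f}

/-! ### The action of the linear group -/

/-- The point `R(a,b)`, without any admissibility requirement. -/
def pt {R : Type*} [Ring R] (a b : R) : Submodule R (R × R) := Submodule.span R {(a, b)}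

theorem rowMul_apply {R : Type*} [Ring R] (γ : Matrix (Fin 2) (Fin 2) R) (a b : R) :
    rowMul R γ (a, b) = (a * γ 0 0 + b * γ 1 0, a * γ 0 1 + b * γ 1 1) := rfl

theorem ptAct_pt {R : Type*} [Ring R] (γ : (Matrix (Fin 2) (Fin 2) R)ˣ) (a b : R) :
    ptAct R γ (pt a b) =
      pt (a * γ.val 0 0 + b * γ.val 1 0) (a * γ.val 0 1 + b * γ.val 1 1) := by
  simp [ptAct, pt, Submodule.map_span, rowMul_apply]

theorem ptAct_row_zero {R : Type*} [Ring R] (γ : (Matrix (Fin 2) (Fin 2) R)ˣ) :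
    ptAct R γ (pt 1 0) = Submodule.span R {(γ.val 0 0, γ.val 0 1)} := by
  rw [ptAct_pt]; simp [pt]

theorem ptAct_row_one {R : Type*} [Ring R] (γ : (Matrix (Fin 2) (Fin 2) R)ˣ) :
    ptAct R γ (pt 0 1) = Submodule.span R {(γ.val 1 0, γ.val 1 1)} := by
  rw [ptAct_pt]; simp [pt]

theorem ptAct_one {R : Type*} [Ring R] (p : Submodule R (R × R)) : ptAct R 1 p = p := by
  have h : rowMul R (1 : Matrix (Fin 2) (Fin 2) R) = LinearMap.id := by
    ext <;> simp [rowMul]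
  simp [ptAct, h]

theorem ptAct_ptAct_inv {R : Type*} [Ring R] (γ : (Matrix (Fin 2) (Fin 2) R)ˣ)
    (p : Submodule R (R × R)) : ptAct R γ (ptAct R γ⁻¹ p) = p := by
  rw [← ptAct_mul, inv_mul_cancel, ptAct_one]

theorem ptAct_image_mul {R : Type*} [Ring R] (γ δ : (Matrix (Fin 2) (Fin 2) R)ˣ)
    (C : Set (Submodule R (R × R))) :
    ptAct R (γ * δ) '' C = ptAct R δ '' (ptAct R γ '' C) := by
  rw [Set.image_image]
  simp only [ptAct_mul]

theorem ptAct_injective {R : Type*} [Ring R] (γ : (Matrix (Fin 2) (Fin 2) R)ˣ) :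
    Function.Injective (ptAct R γ) :=
  Function.LeftInverse.injective (ptAct_inv_ptAct γ)

/-- The action of an invertible matrix as an automorphism of the lattice of submodules. -/
def ptActIso {R : Type*} [Ring R] (γ : (Matrix (Fin 2) (Fin 2) R)ˣ) :
    Submodule R (R × R) ≃o Submodule R (R × R) :=
  Equiv.toOrderIso
    ⟨ptAct R γ, ptAct R γ⁻¹, ptAct_inv_ptAct γ, ptAct_ptAct_inv γ⟩
    (fun _ _ h => Submodule.map_mono h) (fun _ _ h => Submodule.map_mono h)

theorem isCompl_ptAct {R : Type*} [Ring R] (γ : (Matrix (Fin 2) (Fin 2) R)ˣ)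
    {p q : Submodule R (R × R)} (h : IsCompl p q) : IsCompl (ptAct R γ p) (ptAct R γ q) :=
  (ptActIso γ).isCompl h

theorem mem_pt {R : Type*} [Ring R] {a b : R} {v : R × R} :
    v ∈ pt a b ↔ ∃ x : R, x * a = v.1 ∧ x * b = v.2 := by
  simp [pt, Submodule.mem_span_singleton, Prod.ext_iff]

theorem pt_unit_mul {R : Type*} [Ring R] (u : Rˣ) (a b : R) :
    pt ((u : R) * a) ((u : R) * b) = pt a b := by
  have h := Submodule.span_singleton_group_smul_eq R u ((a, b) : R × R)
  simpa [pt, Units.smul_def] using h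

theorem isCompl_std (R : Type*) [Ring R] : IsCompl (pt (1 : R) 0) (pt 0 1) := by
  refine ⟨Submodule.disjoint_def.2 fun v h1 h2 => ?_, codisjoint_iff.2 (eq_top_iff.2 ?_)⟩
  · obtain ⟨x, -, hx⟩ := mem_pt.1 h1
    obtain ⟨y, hy, -⟩ := mem_pt.1 h2
    rw [mul_zero] at hx hy
    exact Prod.ext hy.symm hx.symm
  · rintro ⟨a, b⟩ -
    exact Submodule.mem_sup.2 ⟨(a, 0), mem_pt.2 ⟨a, by simp⟩, (0, b), mem_pt.2 ⟨b, by simp⟩,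
      by simp⟩

/-- The invertible matrix with rows `(s,0)` and `(0,t)`. -/
def diagU {R : Type*} [Ring R] (s t : Rˣ) : (Matrix (Fin 2) (Fin 2) R)ˣ where
  val := !![(s : R), 0; 0, (t : R)]
  inv := !![((s⁻¹ : Rˣ) : R), 0; 0, ((t⁻¹ : Rˣ) : R)]
  val_inv := by simp [Matrix.one_fin_two]
  inv_val := by simp [Matrix.one_fin_two]

/-- The invertible matrix with rows `(1,0)` and `(s,t)`. -/
def lowU {R : Type*} [Ring R] (s : R) (t : Rˣ) : (Matrix (Fin 2) (Fin 2) R)ˣ where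
  val := !![1, 0; s, (t : R)]
  inv := !![1, 0; -((t⁻¹ : Rˣ) : R) * s, ((t⁻¹ : Rˣ) : R)]
  val_inv := by simp [Matrix.one_fin_two]
  inv_val := by simp [Matrix.one_fin_two]

theorem diagU_mul {R : Type*} [Ring R] (u v : Rˣ) :
    diagU (u * v) (u * v) = diagU u u * diagU v v := by
  ext i j
  fin_cases i <;> fin_cases j <;> simp [diagU]

theorem ptAct_diagU {R : Type*} [Ring R] (s t : Rˣ) (a b : R) :
    ptAct R (diagU s t) (pt a b) = pt (a * s) (b * t) := by
  simp [ptAct_pt, diagU]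

/-! ### Triples of mutually distant points -/

/-- A right-invertible row spanning a complement of `R(0,1)` has a unit as first entry. -/
theorem isUnit_fst {R : Type*} [Ring R] {s t x y : R} (h1 : s * x + t * y = 1)
    (h : IsCompl (pt 0 1) (pt s t)) : IsUnit s := by
  have htop : ((1, 0) : R × R) ∈ pt 0 1 ⊔ pt s t := by rw [h.sup_eq_top]; trivial
  obtain ⟨v, hv, w, hw, hvw⟩ := Submodule.mem_sup.1 htop
  obtain ⟨c, hc1, hc2⟩ := mem_pt.1 hv
  obtain ⟨z, hz1, hz2⟩ := mem_pt.1 hw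
  have hzs : z * s = 1 := by
    have := congrArg Prod.fst hvw
    simp [← hc1, ← hz1] at this
    exact this
  -- `(s z - 1)(s, t)` lies in both complements, so it vanishes.
  have hmem : (0, (s * z - 1) * t) ∈ pt (0 : R) 1 ⊓ pt s t := by
    refine ⟨mem_pt.2 ⟨(s * z - 1) * t, by simp, by simp⟩, mem_pt.2 ⟨s * z - 1, ?_, rfl⟩⟩
    simp [sub_mul, mul_assoc, hzs]
  rw [h.inf_eq_bot] at hmem
  have ht : (s * z - 1) * t = 0 := by simpa using hmem
  have hs : (s * z - 1) * s = 0 := by simp [sub_mul, mul_assoc, hzs]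
  have hsz : s * z - 1 = 0 := by
    calc s * z - 1 = (s * z - 1) * (s * x + t * y) := by rw [h1, mul_one]
      _ = 0 := by rw [mul_add, ← mul_assoc, ← mul_assoc, hs, ht]; simp
  exact ⟨⟨s, z, sub_eq_zero.1 hsz, hzs⟩, rfl⟩

theorem isUnit_snd {R : Type*} [Ring R] {s t x y : R} (h1 : s * x + t * y = 1)
    (h : IsCompl (pt 1 0) (pt s t)) : IsUnit t := by
  -- Interchanging the coordinates reduces this to the first entry.
  let σ : (Matrix (Fin 2) (Fin 2) R)ˣ :=
    ⟨!![0, 1; 1, 0], !![0, 1; 1, 0], by simp [Matrix.one_fin_two], by simp [Matrix.one_fin_two]⟩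
  have h' := isCompl_ptAct σ h
  simp only [ptAct_pt, σ] at h'
  refine isUnit_fst (x := y) (y := x) (t := s) (by rw [add_comm, h1]) (by simpa using h')

/-- `GL₂(R)` acts transitively on triples of mutually distant points. -/
theorem exists_act_triple {R : Type*} [Ring R] {p q r : Submodule R (R × R)}
    (hpq : Distant R p q) (hpr : Distant R p r) (hqr : Distant R q r) :
    ∃ γ : (Matrix (Fin 2) (Fin 2) R)ˣ, p = ptAct R γ (pt 1 0) ∧ q = ptAct R γ (pt 0 1) ∧
      r = ptAct R γ (pt 1 1) := by
  have hpr' := hpr.isCompl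
  have hqr' := hqr.isCompl
  obtain ⟨γ, hp, hq⟩ := hpq
  obtain ⟨δ, -, hr⟩ := hpr
  replace hp : p = ptAct R γ (pt 1 0) := by rw [hp, ptAct_row_zero]
  replace hq : q = ptAct R γ (pt 0 1) := by rw [hq, ptAct_row_one]
  replace hr : r = ptAct R γ (pt ((δ * γ⁻¹).val 1 0) ((δ * γ⁻¹).val 1 1)) := by
    have : pt ((δ * γ⁻¹).val 1 0) ((δ * γ⁻¹).val 1 1) = ptAct R (δ * γ⁻¹) (pt 0 1) := by
      simp [ptAct_pt]
    rw [this, ← ptAct_mul, inv_mul_cancel_right, ptAct_row_one, hr]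
  have hinv : (δ * γ⁻¹).val 1 0 * (δ * γ⁻¹)⁻¹.val 0 1 +
      (δ * γ⁻¹).val 1 1 * (δ * γ⁻¹)⁻¹.val 1 1 = 1 := by
    have := congrFun (congrFun (δ * γ⁻¹).mul_inv 1) 1
    rwa [Matrix.mul_apply, Fin.sum_univ_two, Matrix.one_apply_eq] at this
  generalize (δ * γ⁻¹).val 1 0 = s at *
  generalize (δ * γ⁻¹).val 1 1 = t at *
  rw [hp, hr] at hpr'
  rw [hq, hr] at hqr'
  replace hpr' := isCompl_ptAct γ⁻¹ hpr'
  replace hqr' := isCompl_ptAct γ⁻¹ hqr'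
  rw [ptAct_inv_ptAct, ptAct_inv_ptAct] at hpr' hqr'
  obtain ⟨s, rfl⟩ := isUnit_fst hinv hqr'
  obtain ⟨t, rfl⟩ := isUnit_snd hinv hpr'
  refine ⟨diagU s t * γ, ?_, ?_, ?_⟩
  · rw [ptAct_mul, ptAct_diagU, hp]
    have := pt_unit_mul s (1 : R) 0
    rw [mul_one, mul_zero] at this
    rw [one_mul, zero_mul, this]
  · rw [ptAct_mul, ptAct_diagU, hq]
    have := pt_unit_mul t (0 : R) 1
    rw [mul_one, mul_zero] at this
    rw [one_mul, zero_mul, this]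
  · rw [ptAct_mul, ptAct_diagU, hr, one_mul, one_mul]

/-- The stabiliser of the standard triple consists of scalar matrices. -/
theorem eq_diagU_of_fix {R : Type*} [Ring R] {γ : (Matrix (Fin 2) (Fin 2) R)ˣ}
    (h0 : ptAct R γ (pt 1 0) = pt 1 0) (h1 : ptAct R γ (pt 0 1) = pt 0 1)
    (h2 : ptAct R γ (pt 1 1) = pt 1 1) : ∃ u : Rˣ, γ = diagU u u := by
  have self (a b : R) : (a, b) ∈ pt a b := mem_pt.2 ⟨1, by simp, by simp⟩
  simp only [ptAct_pt, one_mul, zero_mul, add_zero, zero_add] at h0 h1 h2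
  obtain ⟨x, -, h01⟩ := mem_pt.1 (h0 ▸ self (γ.val 0 0) (γ.val 0 1))
  obtain ⟨y, h10, -⟩ := mem_pt.1 (h1 ▸ self (γ.val 1 0) (γ.val 1 1))
  obtain ⟨z, hz, hz'⟩ := mem_pt.1 (h2 ▸ self (γ.val 0 0 + γ.val 1 0) (γ.val 0 1 + γ.val 1 1))
  simp only [mul_zero, mul_one] at h01 h10 hz hz'
  rw [← h10, add_zero] at hz
  rw [← h01, zero_add] at hz'
  have e1 := congrFun (congrFun γ.mul_inv 0) 0
  have e2 := congrFun (congrFun γ.inv_mul 0) 0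
  rw [Matrix.mul_apply, Fin.sum_univ_two, Matrix.one_apply_eq] at e1 e2
  rw [← h01, zero_mul, add_zero] at e1
  rw [← h10, mul_zero, add_zero] at e2
  refine ⟨⟨γ.val 0 0, γ⁻¹.val 0 0, e1, e2⟩, ?_⟩
  ext i j
  fin_cases i <;> fin_cases j <;> simp [diagU, ← h01, ← h10, ← hz, ← hz']

/-! ### The standard chain -/

/-- The homomorphism `GL₂(K) → GL₂(R)` induced by `f`. -/
def mapGL {K R : Type*} [Ring K] [Ring R] (f : K →+* R) :
    (Matrix (Fin 2) (Fin 2) K)ˣ →* (Matrix (Fin 2) (Fin 2) R)ˣ :=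
  Units.map (f.mapMatrix : Matrix (Fin 2) (Fin 2) K →+* Matrix (Fin 2) (Fin 2) R).toMonoidHom

theorem mapGL_apply {K R : Type*} [Ring K] [Ring R] (f : K →+* R)
    (γ : (Matrix (Fin 2) (Fin 2) K)ˣ) (i j : Fin 2) : (mapGL f γ).val i j = f (γ.val i j) := rfl

theorem ptAct_mapGL {K R : Type*} [Ring K] [Ring R] (f : K →+* R)
    (γ : (Matrix (Fin 2) (Fin 2) K)ˣ) (a b : K) :
    ptAct R (mapGL f γ) (pt (f a) (f b)) =
      pt (f (a * γ.val 0 0 + b * γ.val 1 0)) (f (a * γ.val 0 1 + b * γ.val 1 1)) := by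
  simp [ptAct_pt, mapGL_apply]

/-- The standard chain is the orbit of `R(1,0)` under `GL₂(K)`. -/
theorem mem_stdChain {K R : Type*} [DivisionRing K] [Ring R] {f : K →+* R}
    {p : Submodule R (R × R)} :
    p ∈ StdChain K R f ↔
      ∃ γ : (Matrix (Fin 2) (Fin 2) K)ˣ, p = ptAct R (mapGL f γ) (pt 1 0) := by
  constructor
  · rintro ⟨_, _, ⟨γ, rfl, rfl⟩, rfl⟩
    exact ⟨γ, by simp only [ptAct_row_zero, mapGL_apply]⟩
  · rintro ⟨γ, rfl⟩
    exact ⟨_, _, ⟨γ, rfl, rfl⟩, by simp only [ptAct_row_zero, mapGL_apply]⟩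

theorem ptAct_mem_stdChain {K R : Type*} [DivisionRing K] [Ring R] {f : K →+* R}
    (γ : (Matrix (Fin 2) (Fin 2) K)ˣ) {p : Submodule R (R × R)} (hp : p ∈ StdChain K R f) :
    ptAct R (mapGL f γ) p ∈ StdChain K R f := by
  obtain ⟨δ, rfl⟩ := mem_stdChain.1 hp
  exact mem_stdChain.2 ⟨δ * γ, by rw [map_mul, ptAct_mul]⟩

theorem mapGL_image_stdChain {K R : Type*} [DivisionRing K] [Ring R] (f : K →+* R)
    (γ : (Matrix (Fin 2) (Fin 2) K)ˣ) :
    ptAct R (mapGL f γ) '' StdChain K R f = StdChain K R f := by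
  apply Set.Subset.antisymm
  · rintro _ ⟨p, hp, rfl⟩
    exact ptAct_mem_stdChain γ hp
  · intro p hp
    exact ⟨_, ptAct_mem_stdChain γ⁻¹ hp, by rw [map_inv, ptAct_ptAct_inv]⟩

/-- Points of the standard chain that are complementary over `R` are distant over `K`. -/
theorem distant_of_isCompl {K R : Type*} [DivisionRing K] [Ring R] [Nontrivial R] (f : K →+* R)
    (γ δ : (Matrix (Fin 2) (Fin 2) K)ˣ)
    (h : IsCompl (ptAct R (mapGL f γ) (pt 1 0)) (ptAct R (mapGL f δ) (pt 1 0))) :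
    Distant K (ptAct K γ (pt 1 0)) (ptAct K δ (pt 1 0)) := by
  -- In the coordinates given by `γ`, the second point has a nonzero second entry.
  have h' := isCompl_ptAct (mapGL f γ)⁻¹ h
  rw [ptAct_inv_ptAct, ← map_inv, ← ptAct_mul, ← map_mul] at h'
  have hδ : δ = (δ * γ⁻¹) * γ := by simp
  have hinv : (δ * γ⁻¹).val 0 0 * (δ * γ⁻¹)⁻¹.val 0 0 +
      (δ * γ⁻¹).val 0 1 * (δ * γ⁻¹)⁻¹.val 1 0 = 1 := by
    have := congrFun (congrFun (δ * γ⁻¹).mul_inv 0) 0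
    rwa [Matrix.mul_apply, Fin.sum_univ_two, Matrix.one_apply_eq] at this
  replace hinv := congrArg f hinv
  rw [hδ]
  generalize δ * γ⁻¹ = ε at *
  have h'' : IsCompl (pt 1 0) (pt (f (ε.val 0 0)) (f (ε.val 0 1))) := by
    simpa [ptAct_pt, mapGL_apply] using h'
  have hu : IsUnit (f (ε.val 0 1)) :=
    isUnit_snd (by simpa using hinv) h''
  have ht : ε.val 0 1 ≠ 0 := fun h0 => by simp [h0] at hu
  refine ⟨lowU (ε.val 0 0) (Units.mk0 _ ht) * γ, ?_, ?_⟩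
  · have : ptAct K (lowU (ε.val 0 0) (Units.mk0 _ ht) * γ) (pt 1 0) = ptAct K γ (pt 1 0) := by
      rw [ptAct_mul, ptAct_pt (lowU _ _)]; simp [lowU]
    rw [← this, ptAct_row_zero]
  · have : ptAct K (lowU (ε.val 0 0) (Units.mk0 _ ht) * γ) (pt 0 1) =
        ptAct K (ε * γ) (pt 1 0) := by
      rw [ptAct_mul, ptAct_mul, ptAct_pt (lowU _ _), ptAct_pt ε]; simp [lowU]
    rw [← this, ptAct_row_one]

/-- An equality of points over `K` persists over `R`. -/
theorem pt_map_eq {K R : Type*} [Ring K] [Ring R] (f : K →+* R) {a b c d : K}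
    (h : pt a b = pt c d) : pt (f a) (f b) = pt (f c) (f d) := by
  have key : ∀ a b c d : K, pt a b = pt c d → pt (f a) (f b) ≤ pt (f c) (f d) := by
    intro a b c d h
    have : (a, b) ∈ pt c d := h ▸ mem_pt.2 ⟨1, by simp, by simp⟩
    obtain ⟨x, rfl, rfl⟩ := mem_pt.1 this
    rw [pt, Submodule.span_singleton_le_iff_mem]
    exact mem_pt.2 ⟨f x, by simp, by simp⟩
  exact le_antisymm (key _ _ _ _ h) (key _ _ _ _ h.symm)

/-- Three mutually complementary points of the standard chain are the image of the standard triple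
under a matrix over `K`. -/
theorem exists_act_triple_std {K R : Type*} [DivisionRing K] [Ring R] {f : K →+* R}
    {p q r : Submodule R (R × R)} (hp : p ∈ StdChain K R f) (hq : q ∈ StdChain K R f)
    (hr : r ∈ StdChain K R f) (hpq : IsCompl p q) (hpr : IsCompl p r) (hqr : IsCompl q r) :
    ∃ γ : (Matrix (Fin 2) (Fin 2) K)ˣ, p = ptAct R (mapGL f γ) (pt 1 0) ∧
      q = ptAct R (mapGL f γ) (pt 0 1) ∧ r = ptAct R (mapGL f γ) (pt 1 1) := by
  rcases subsingleton_or_nontrivial R with hR | hR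
  · exact ⟨1, Subsingleton.elim _ _, Subsingleton.elim _ _, Subsingleton.elim _ _⟩
  obtain ⟨α, rfl⟩ := mem_stdChain.1 hp
  obtain ⟨β, rfl⟩ := mem_stdChain.1 hq
  obtain ⟨δ, rfl⟩ := mem_stdChain.1 hr
  obtain ⟨γ, h0, h1, h2⟩ := exists_act_triple (distant_of_isCompl f α β hpq)
    (distant_of_isCompl f α δ hpr) (distant_of_isCompl f β δ hqr)
  rw [ptAct_pt, ptAct_pt] at h0 h1 h2
  refine ⟨γ, ?_, ?_, ?_⟩
  · simpa [ptAct_pt, mapGL_apply] using pt_map_eq f h0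
  · simpa [ptAct_pt, mapGL_apply] using pt_map_eq f h1
  · simpa [ptAct_pt, mapGL_apply] using pt_map_eq f h2

theorem std_triple_mem {K R : Type*} [DivisionRing K] [Ring R] (f : K →+* R) :
    pt 1 0 ∈ StdChain K R f ∧ pt 0 1 ∈ StdChain K R f ∧ pt 1 1 ∈ StdChain K R f := by
  refine ⟨⟨1, 0, ⟨1, by simp, by simp⟩, by simp [pt]⟩, ⟨0, 1, ⟨⟨!![0, 1; 1, 0], !![0, 1; 1, 0],
    by simp [Matrix.one_fin_two], by simp [Matrix.one_fin_two]⟩, by simp, by simp⟩, by simp [pt]⟩,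
    ⟨1, 1, ⟨⟨!![1, 1; 0, 1], !![1, -1; 0, 1],
    by simp [Matrix.one_fin_two], by simp [Matrix.one_fin_two]⟩, by simp, by simp⟩, by simp [pt]⟩⟩

/-- The chains through the image of the standard triple under `γ`. -/
theorem chain_iff {K R : Type*} [DivisionRing K] [Ring R] (f : K →+* R)
    (γ : (Matrix (Fin 2) (Fin 2) R)ˣ) {p q r : Submodule R (R × R)}
    (hpq : Distant R p q) (hpr : Distant R p r) (hqr : Distant R q r)
    (h0 : p = ptAct R γ (pt 1 0)) (h1 : q = ptAct R γ (pt 0 1)) (h2 : r = ptAct R γ (pt 1 1))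
    (C : Set (Submodule R (R × R))) :
    (IsKChain K R f C ∧ p ∈ C ∧ q ∈ C ∧ r ∈ C) ↔
      ∃ u : Rˣ, C = ptAct R (diagU u u * γ) '' StdChain K R f := by
  constructor
  · rintro ⟨⟨β, rfl⟩, ⟨p', hp', rfl⟩, ⟨q', hq', rfl⟩, ⟨r', hr', rfl⟩⟩
    have hc := fun {a b} (h : Distant R (ptAct R β a) (ptAct R β b)) =>
      isCompl_ptAct β⁻¹ h.isCompl
    simp only [ptAct_inv_ptAct] at hc
    obtain ⟨δ, rfl, rfl, rfl⟩ := exists_act_triple_std hp' hq' hr' (hc hpq) (hc hpr) (hc hqr)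
    obtain ⟨u, hu⟩ := eq_diagU_of_fix (γ := mapGL f δ * β * γ⁻¹)
      (by rw [ptAct_mul, ptAct_mul, h0, ptAct_inv_ptAct])
      (by rw [ptAct_mul, ptAct_mul, h1, ptAct_inv_ptAct])
      (by rw [ptAct_mul, ptAct_mul, h2, ptAct_inv_ptAct])
    refine ⟨u, ?_⟩
    rw [← hu, inv_mul_cancel_right, ptAct_image_mul, mapGL_image_stdChain]
  · rintro ⟨u, rfl⟩
    have key (a b : R) (h : pt a b ∈ StdChain K R f)
        (hab : pt (a * u) (b * u) = pt a b) :
        ptAct R γ (pt a b) ∈ ptAct R (diagU u u * γ) '' StdChain K R f :=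
      ⟨_, h, by rw [ptAct_mul, ptAct_diagU, hab]⟩
    obtain ⟨m0, m1, m2⟩ := std_triple_mem f
    have e0 := pt_unit_mul u (1 : R) 0
    have e1 := pt_unit_mul u (0 : R) 1
    have e2 := pt_unit_mul u (1 : R) 1
    rw [h0, h1, h2]
    refine ⟨⟨_, rfl⟩, key _ _ m0 ?_, key _ _ m1 ?_, key _ _ m2 ?_⟩
    · simpa using e0
    · simpa using e1
    · simpa using e2

theorem pt_mem_stdChain_iff {K R : Type*} [DivisionRing K] [Ring R] (f : K →+* R) (x : R) :
    pt x 1 ∈ StdChain K R f ↔ ∃ k : K, f k = x := by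
  constructor
  · rintro ⟨a, b, -, h⟩
    have hx : (x, 1) ∈ pt (f a) (f b) := by
      rw [pt, ← h]; exact mem_pt.2 ⟨1, by simp, by simp⟩
    obtain ⟨y, hy1, hy2⟩ := mem_pt.1 hx
    simp only at hy1 hy2
    rcases eq_or_ne b 0 with rfl | hb
    · -- Here `R` is the zero ring.
      rw [map_zero, mul_zero] at hy2
      have := subsingleton_of_zero_eq_one hy2
      exact ⟨0, Subsingleton.elim _ _⟩
    · refine ⟨b⁻¹ * a, ?_⟩
      have hy : y = f b⁻¹ := by
        calc y = y * f b * f b⁻¹ := by rw [mul_assoc, ← map_mul, mul_inv_cancel₀ hb]; simp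
          _ = f b⁻¹ := by rw [hy2, one_mul]
      rw [← hy1, hy, map_mul]
  · rintro ⟨k, rfl⟩
    exact ⟨k, 1, ⟨⟨!![k, 1; 1, 0], !![0, 1; 1, -k], by simp [Matrix.one_fin_two],
      by simp [Matrix.one_fin_two]⟩, by simp, by simp⟩, by simp [pt]⟩

theorem eq_of_mem_stdChain {K R : Type*} [DivisionRing K] [Ring R] {f : K →+* R}
    {p : Submodule R (R × R)} (hp : p ∈ StdChain K R f) :
    p = pt 1 0 ∨ ∃ k : K, p = pt (f k) 1 := by
  obtain ⟨a, b, ⟨γ, h0, h1⟩, rfl⟩ := hp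
  have unit (c : K) (hc : c ≠ 0) (x y : R) : pt (f c * x) (f c * y) = pt x y :=
    pt_unit_mul (Units.map f.toMonoidHom (Units.mk0 c hc)) x y
  rcases eq_or_ne b 0 with rfl | hb
  · left
    have ha : a ≠ 0 := by
      rintro rfl
      have := congrFun (congrFun γ.mul_inv 0) 0
      rw [Matrix.mul_apply, Fin.sum_univ_two, Matrix.one_apply_eq, h0, h1] at this
      simp at this
    simpa [pt] using unit a ha 1 0
  · right
    refine ⟨b⁻¹ * a, ?_⟩
    rw [← unit b hb, ← map_mul, mul_inv_cancel_left₀ hb, mul_one, pt]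

/-! ### The normaliser of `K*` -/

theorem ptAct_diagU_affine {R : Type*} [Ring R] (w : Rˣ) (x : R) :
    ptAct R (diagU w w) (pt x 1) = pt (((w⁻¹ : Rˣ) : R) * x * w) 1 := by
  rw [ptAct_diagU, ← pt_unit_mul w (((w⁻¹ : Rˣ) : R) * x * w)]
  simp [← mul_assoc]

theorem stab_subset_iff {K R : Type*} [DivisionRing K] [Ring R] (f : K →+* R) (w : Rˣ) :
    (∀ p ∈ StdChain K R f, ptAct R (diagU w w) p ∈ StdChain K R f) ↔
      ∀ x ∈ Kstar K R f, ((w⁻¹ : Rˣ) : R) * x * w ∈ Kstar K R f := by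
  constructor
  · rintro h _ ⟨k, hk, rfl⟩
    have h1 := h _ ((pt_mem_stdChain_iff f _).2 ⟨k, rfl⟩)
    rw [ptAct_diagU_affine, pt_mem_stdChain_iff] at h1
    obtain ⟨j, hj⟩ := h1
    rcases eq_or_ne j 0 with rfl | hj0
    · -- A unit equals zero, so `R` is the zero ring.
      have hu : IsUnit (((w⁻¹ : Rˣ) : R) * f k * w) :=
        ((w⁻¹).isUnit.mul ((Ne.isUnit hk).map f)).mul w.isUnit
      rw [← hj, map_zero, isUnit_zero_iff] at hu
      have := subsingleton_of_zero_eq_one hu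
      exact ⟨1, one_ne_zero, Subsingleton.elim _ _⟩
    · exact ⟨j, hj0, hj⟩
  · intro h p hp
    rcases eq_of_mem_stdChain hp with rfl | ⟨k, rfl⟩
    · rw [ptAct_diagU]
      have := pt_unit_mul w (1 : R) 0
      rw [mul_one, mul_zero] at this
      rw [one_mul, zero_mul, this]
      exact hp
    · rw [ptAct_diagU_affine, pt_mem_stdChain_iff]
      rcases eq_or_ne k 0 with rfl | hk
      · exact ⟨0, by simp⟩
      · obtain ⟨j, -, hj⟩ := h _ ⟨k, hk, rfl⟩
        exact ⟨j, hj⟩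

theorem mem_normaliser_iff {K R : Type*} [DivisionRing K] [Ring R] (f : K →+* R) (w : Rˣ) :
    w ∈ NormaliserKstar K R f ↔
      (∀ x ∈ Kstar K R f, ((w⁻¹ : Rˣ) : R) * x * w ∈ Kstar K R f) ∧
      (∀ x ∈ Kstar K R f, (w : R) * x * ((w⁻¹ : Rˣ) : R) ∈ Kstar K R f) := by
  unfold NormaliserKstar
  rw [Set.mem_ofPred_eq]
  constructor
  · intro h
    refine ⟨fun x hx => h ▸ ⟨x, hx, rfl⟩, fun x hx => ?_⟩
    rw [← h] at hx
    obtain ⟨y, hy, rfl⟩ := hx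
    simpa [mul_assoc] using hy
  · rintro ⟨h1, h2⟩
    apply Set.Subset.antisymm
    · rintro _ ⟨x, hx, rfl⟩
      exact h1 x hx
    · intro x hx
      exact ⟨_, h2 x hx, by simp [mul_assoc]⟩

/-- The scalar matrix `diag(w,w)` stabilises the standard chain exactly when `w` normalises
`K*`. -/
theorem stab_iff {K R : Type*} [DivisionRing K] [Ring R] (f : K →+* R) (w : Rˣ) :
    ptAct R (diagU w w) '' StdChain K R f = StdChain K R f ↔ w ∈ NormaliserKstar K R f := by
  have hw : (diagU w w)⁻¹ = diagU w⁻¹ w⁻¹ := by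
    rw [inv_eq_iff_mul_eq_one, ← diagU_mul, mul_inv_cancel]
    ext i j
    fin_cases i <;> fin_cases j <;> simp [diagU]
  have h2 := stab_subset_iff f w⁻¹
  rw [inv_inv] at h2
  rw [mem_normaliser_iff, ← stab_subset_iff, ← h2, ← hw]
  constructor
  · intro h
    refine ⟨fun p hp => h ▸ ⟨p, hp, rfl⟩, fun p hp => ?_⟩
    rw [← h] at hp
    obtain ⟨y, hy, rfl⟩ := hp
    rwa [ptAct_inv_ptAct]
  · rintro ⟨h1, h2⟩
    apply Set.Subset.antisymm
    · rintro _ ⟨x, hx, rfl⟩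
      exact h1 x hx
    · intro x hx
      exact ⟨_, h2 x hx, ptAct_ptAct_inv _ _⟩

theorem chain_eq_iff {K R : Type*} [DivisionRing K] [Ring R] (f : K →+* R)
    (γ : (Matrix (Fin 2) (Fin 2) R)ˣ) (u v : Rˣ) :
    ptAct R (diagU u u * γ) '' StdChain K R f = ptAct R (diagU v v * γ) '' StdChain K R f ↔
      u * v⁻¹ ∈ NormaliserKstar K R f := by
  have hu : diagU u u = diagU (u * v⁻¹) (u * v⁻¹) * diagU v v := by
    rw [← diagU_mul, inv_mul_cancel_right]
  rw [hu, mul_assoc, ptAct_image_mul, (ptAct_injective _).image_injective.eq_iff, stab_iff]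

theorem normaliser_one {K R : Type*} [DivisionRing K] [Ring R] (f : K →+* R) :
    1 ∈ NormaliserKstar K R f := by
  simp [mem_normaliser_iff]

theorem normaliser_mul {K R : Type*} [DivisionRing K] [Ring R] (f : K →+* R) {a b : Rˣ}
    (ha : a ∈ NormaliserKstar K R f) (hb : b ∈ NormaliserKstar K R f) :
    a * b ∈ NormaliserKstar K R f := by
  rw [← stab_iff] at *
  rw [diagU_mul, ptAct_image_mul, ha, hb]

theorem normaliser_inv {K R : Type*} [DivisionRing K] [Ring R] (f : K →+* R) {a : Rˣ}
    (ha : a ∈ NormaliserKstar K R f) : a⁻¹ ∈ NormaliserKstar K R f := by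
  rw [mem_normaliser_iff] at *
  rw [inv_inv]
  exact ha.symm

theorem coset_eq_iff {K R : Type*} [DivisionRing K] [Ring R] (f : K →+* R) (u v : Rˣ) :
    (fun n => n * u) '' NormaliserKstar K R f = (fun n => n * v) '' NormaliserKstar K R f ↔
      u * v⁻¹ ∈ NormaliserKstar K R f := by
  constructor
  · intro h
    have : u ∈ (fun n => n * u) '' NormaliserKstar K R f := ⟨1, normaliser_one f, one_mul u⟩
    rw [h] at this
    obtain ⟨n, hn, rfl⟩ := this
    simpa using hn
  · intro h
    apply Set.Subset.antisymm
    · rintro _ ⟨n, hn, rfl⟩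
      exact ⟨n * (u * v⁻¹), normaliser_mul f hn h, by simp [mul_assoc]⟩
    · rintro _ ⟨n, hn, rfl⟩
      exact ⟨n * (u * v⁻¹)⁻¹, normaliser_mul f hn (normaliser_inv f h), by simp [mul_assoc]⟩

/-- The standard triple is mutually distant. -/
theorem std_distant (R : Type*) [Ring R] :
    Distant R (pt 1 0) (pt 0 1) ∧ Distant R (pt 1 0) (pt 1 1) ∧ Distant R (pt 0 1) (pt 1 1) := by
  refine ⟨⟨1, by simp [pt], by simp [pt]⟩, ⟨lowU 1 1, by simp [pt, lowU], by simp [pt, lowU]⟩,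
    ⟨⟨!![0, 1; 1, 1], !![-1, 1; 1, 0], by simp [Matrix.one_fin_two],
      by simp [Matrix.one_fin_two]⟩, by simp [pt], by simp [pt]⟩⟩

/-- (a) The chains through three mutually distant points are in bijection with the right cosets
of the normaliser `N` of `K*` in `R*`; (b) there is exactly one chain through any three mutually
distant points iff `K*` is normal in `R*`. -/
theorem stmt_12 {K R : Type*} [DivisionRing K] [Ring R] (f : K →+* R) :
    (∀ p q r : Submodule R (R × R),
      Distant R p q → Distant R p r → Distant R q r →
        Nonempty
          ({C : Set (Submodule R (R × R)) // IsKChain K R f C ∧ p ∈ C ∧ q ∈ C ∧ r ∈ C} ≃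
            {S : Set Rˣ // ∃ u : Rˣ, S = (fun n => n * u) '' NormaliserKstar K R f})) ∧
    ((∀ p q r : Submodule R (R × R),
        Distant R p q → Distant R p r → Distant R q r →
          ∃! C : Set (Submodule R (R × R)), IsKChain K R f C ∧ p ∈ C ∧ q ∈ C ∧ r ∈ C) ↔
      (∀ u : Rˣ, ∀ x ∈ Kstar K R f, ((u⁻¹ : Rˣ) : R) * x * (u : R) ∈ Kstar K R f)) := by
  constructor
  · intro p q r hpq hpr hqr
    obtain ⟨γ, h0, h1, h2⟩ := exists_act_triple hpq hpr hqr
    have hC := chain_iff f γ hpq hpr hqr h0 h1 h2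
    -- Chains and cosets are both parametrised by `Rˣ`, with the same fibres.
    let F : Rˣ → {C : Set (Submodule R (R × R)) // IsKChain K R f C ∧ p ∈ C ∧ q ∈ C ∧ r ∈ C} :=
      fun u => ⟨ptAct R (diagU u u * γ) '' StdChain K R f, (hC _).2 ⟨u, rfl⟩⟩
    let G : Rˣ → {S : Set Rˣ // ∃ u : Rˣ, S = (fun n => n * u) '' NormaliserKstar K R f} :=
      fun u => ⟨(fun n => n * u) '' NormaliserKstar K R f, u, rfl⟩
    have hF : Function.Surjective F := fun ⟨C, hc⟩ => by
      obtain ⟨u, rfl⟩ := (hC C).1 hc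
      exact ⟨u, rfl⟩
    have hG : Function.Surjective G := fun ⟨S, u, hu⟩ => ⟨u, Subtype.ext hu.symm⟩
    have hFG (u v : Rˣ) : F u = F v ↔ G u = G v := by
      rw [Subtype.ext_iff, Subtype.ext_iff]
      exact (chain_eq_iff f γ u v).trans (coset_eq_iff f u v).symm
    exact ⟨(Setoid.quotientKerEquivOfSurjective F hF).symm.trans
      ((Quotient.congrRight hFG).trans (Setoid.quotientKerEquivOfSurjective G hG))⟩
  · constructor
    · intro h u
      obtain ⟨d1, d2, d3⟩ := std_distant R
      have hC := chain_iff f 1 d1 d2 d3 (ptAct_one _).symm (ptAct_one _).symm (ptAct_one _).symm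
      have := (h _ _ _ d1 d2 d3).unique ((hC _).2 ⟨u, rfl⟩) ((hC _).2 ⟨1, rfl⟩)
      rw [chain_eq_iff, inv_one, mul_one, mem_normaliser_iff] at this
      exact this.1
    · intro h p q r hpq hpr hqr
      obtain ⟨γ, h0, h1, h2⟩ := exists_act_triple hpq hpr hqr
      have hC := chain_iff f γ hpq hpr hqr h0 h1 h2
      refine ⟨_, (hC _).2 ⟨1, rfl⟩, fun C hc => ?_⟩
      obtain ⟨u, rfl⟩ := (hC C).1 hc
      rw [chain_eq_iff, mem_normaliser_iff]
      exact ⟨h _, fun x hx => by simpa using h (u * 1⁻¹)⁻¹ x hx⟩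
end

section
/- Let R be a local ring. Then the projective line over R has cardinality card P(R) = card R + card(rad R), where rad R = R \ R* is the Jacobson radical of R. -/
/-- `R` is a local ring: the non-units form a (two-sided) ideal. -/
def NonunitsIdeal (R : Type*) [Ring R] : Prop :=
  (∀ a b : R, ¬IsUnit a → ¬IsUnit b → ¬IsUnit (a + b)) ∧
  (∀ a x : R, ¬IsUnit a → ¬IsUnit (x * a) ∧ ¬IsUnit (a * x))

theorem admissible_one_left {R : Type*} [Ring R] (t : R) : Admissible R 1 t :=
  ⟨⟨!![1, t; 0, 1], !![1, -t; 0, 1],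
    by simp [Matrix.one_fin_two],
    by simp [Matrix.one_fin_two]⟩, rfl, rfl⟩

theorem admissible_one_right {R : Type*} [Ring R] (x : R) : Admissible R x 1 :=
  ⟨⟨!![x, 1; 1, 0], !![0, 1; 1, -x],
    by simp [Matrix.one_fin_two],
    by simp [Matrix.one_fin_two]⟩, rfl, rfl⟩

theorem isUnit_or_isUnit_of_admissible {R : Type*} [Ring R] (h : NonunitsIdeal R) {a b : R}
    (hab : Admissible R a b) : IsUnit a ∨ IsUnit b := by
  obtain ⟨γ, rfl, rfl⟩ := hab
  have h1 : γ.val 0 0 * γ⁻¹.val 0 0 + γ.val 0 1 * γ⁻¹.val 1 0 = 1 := by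
    have := congrFun (congrFun γ.mul_inv 0) 0
    rwa [Matrix.mul_apply, Fin.sum_univ_two, Matrix.one_apply_eq] at this
  by_contra! hn
  exact h.1 _ _ (h.2 _ _ hn.1).2 (h.2 _ _ hn.2).2 (h1 ▸ isUnit_one)

theorem span_pair_unit_mul {R : Type*} [Ring R] (u : Rˣ) (a b : R) :
    Submodule.span R {((u : R) * a, (u : R) * b)} = Submodule.span R {(a, b)} :=
  Submodule.span_singleton_group_smul_eq R u (a, b)

/-- The normal form of a point: `R(1, t)` for `t : R`, or `R(x, 1)` for a non-unit `x`. -/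
def normalForm (R : Type*) [Ring R] : R ⊕ {x : R // ¬IsUnit x} → Submodule R (R × R)
  | .inl t => Submodule.span R {(1, t)}
  | .inr x => Submodule.span R {(x.1, 1)}

theorem span_one_left_ne_span_one_right {R : Type*} [Ring R] (h : NonunitsIdeal R) (t : R) {x : R}
    (hx : ¬IsUnit x) : Submodule.span R {((1 : R), t)} ≠ Submodule.span R {(x, (1 : R))} := by
  intro he
  have hm : ((1 : R), t) ∈ Submodule.span R {(x, (1 : R))} :=
    he ▸ Submodule.mem_span_singleton_self _
  obtain ⟨c, hc⟩ := Submodule.mem_span_singleton.1 hm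
  have h1 : c * x = 1 := congrArg Prod.fst hc
  exact (h.2 x c hx).1 (h1 ▸ isUnit_one)

theorem normalForm_injective {R : Type*} [Ring R] (h : NonunitsIdeal R) :
    Function.Injective (normalForm R) := by
  rintro (s | x) (t | y) he <;> simp only [normalForm] at he
  · have hm : ((1 : R), s) ∈ Submodule.span R {((1 : R), t)} :=
      he ▸ Submodule.mem_span_singleton_self _
    obtain ⟨c, hc⟩ := Submodule.mem_span_singleton.1 hm
    simp only [Prod.smul_mk, smul_eq_mul, mul_one, Prod.mk.injEq] at hc
    rw [← hc.2, hc.1, one_mul]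
  · exact absurd he (span_one_left_ne_span_one_right h s y.2)
  · exact absurd he.symm (span_one_left_ne_span_one_right h t x.2)
  · have hm : (x.1, (1 : R)) ∈ Submodule.span R {(y.1, (1 : R))} :=
      he ▸ Submodule.mem_span_singleton_self _
    obtain ⟨c, hc⟩ := Submodule.mem_span_singleton.1 hm
    simp only [Prod.smul_mk, smul_eq_mul, mul_one, Prod.mk.injEq] at hc
    congr 1
    ext
    rw [← hc.1, hc.2, one_mul]

theorem range_normalForm {R : Type*} [Ring R] (h : NonunitsIdeal R) :
    Set.range (normalForm R) = ProjPoint R := by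
  ext p
  constructor
  · rintro ⟨t | x, rfl⟩
    · exact ⟨1, t, admissible_one_left t, rfl⟩
    · exact ⟨x.1, 1, admissible_one_right x.1, rfl⟩
  · rintro ⟨a, b, hab, rfl⟩
    by_cases ha : IsUnit a
    · obtain ⟨u, rfl⟩ := ha
      refine ⟨.inl (↑u⁻¹ * b), ?_⟩
      rw [normalForm, ← span_pair_unit_mul u, mul_one, Units.mul_inv_cancel_left]
    · obtain ⟨u, rfl⟩ := (isUnit_or_isUnit_of_admissible h hab).resolve_left ha
      refine ⟨.inr ⟨↑u⁻¹ * a, (h.2 _ _ ha).1⟩, ?_⟩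
      rw [normalForm, ← span_pair_unit_mul u, mul_one, Units.mul_inv_cancel_left]

/-- For a local ring, `card P(R) = card R + card rad R`, where `rad R = R \ R*`. -/
theorem stmt_15 {R : Type*} [Ring R] (h : NonunitsIdeal R) :
    Cardinal.mk (ProjPoint R) = Cardinal.mk R + Cardinal.mk {x : R // ¬IsUnit x} := by
  rw [Cardinal.add_def, ← range_normalForm h]
  exact Cardinal.mk_range_eq _ (normalForm_injective h)
end

section
/- Let q ≥ 2 be a prime power, h ≥ 1 an integer, L a finite field with q^h elements and K a subfield of L with q elements. Then the chain geometry Σ(K,L) is a 3-design with parameters v = q^h + 1, k = q + 1, λ₃ = 1: the projective line P(L) has exactly q^h + 1 points, every K-chain has exactly q + 1 points, and any three distinct points of P(L) are contained in exactly one K-chain. -/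
/-!
Every `K`-chain is an injective image of the standard chain, and `P(L)` is itself the standard
chain for the trivial extension `L / L`, so both point counts come from the normal form
`L(1,x)` with `x ∈ K`, or `L(0,1)`, of the points of the standard chain (`card_stdChain`).

For the `3`-design property, let `wedge u v` be the determinant of the matrix with rows `u`, `v`.
Three pairwise independent vectors `u, v, t` satisfy
`wedge t v • u + wedge u t • v = wedge u v • t`,
so the invertible matrix `frameMat u v t` with rows `wedge t v • u` and `wedge u t • v` maps the points
`L(1,0)`, `L(0,1)`, `L(1,1)` to `Lu`, `Lv`, `Lt`; the chain it defines contains the three points.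
Conversely let `C₀ · γ` contain them. Then `u, v, t` are multiples of vectors `y₁γ, y₂γ, y₃γ` with
all `yᵢ` over `K`, and by homogeneity of the construction `frameMat u v t` is a scalar multiple of
`frameMat y₁ y₂ y₃ * γ`. The first factor is an element of `GL₂(K)` and stabilises `C₀`, so
`C₀ · γ` is the chain of `frameMat u v t` (`chain_eq`).
-/

/-- The projective line over a field `L`: the one-dimensional subspaces `L(a,b)` of `L²`. -/
def ProjLine (L : Type*) [Field L] : Set (Submodule L (L × L)) :=
  {p | ∃ v : L × L, v ≠ 0 ∧ p = Submodule.span L {v}}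

/-- Right multiplication of a row vector by a matrix, as a linear map. -/
def rowMulF (L : Type*) [Field L] (γ : Matrix (Fin 2) (Fin 2) L) : (L × L) →ₗ[L] (L × L) where
  toFun v := (v.1 * γ 0 0 + v.2 * γ 1 0, v.1 * γ 0 1 + v.2 * γ 1 1)
  map_add' x y := by
    simp only [Prod.fst_add, Prod.snd_add, add_mul, Prod.mk_add_mk, Prod.mk.injEq]
    constructor <;> abel
  map_smul' c v := by
    simp only [Prod.smul_fst, Prod.smul_snd, smul_eq_mul, RingHom.id_apply, Prod.smul_mk,
      mul_add, mul_assoc]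

/-- The action of `GL₂(L)` on the projective line: `L(a,b)·γ = L((a,b)·γ)`. -/
def ptActF (L : Type*) [Field L] (γ : (Matrix (Fin 2) (Fin 2) L)ˣ)
    (p : Submodule L (L × L)) : Submodule L (L × L) :=
  p.map (rowMulF L γ.val)

/-- The standard chain `C₀ = {L(a,b) : (a,b) ∈ K² \ {(0,0)}}`, for the subfield `K`
embedded via `f`. -/
def StdChainF (K L : Type*) [Field K] [Field L] (f : K →+* L) :
    Set (Submodule L (L × L)) :=
  {p | ∃ a b : K, (a, b) ≠ (0, 0) ∧ p = Submodule.span L {(f a, f b)}}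

/-- A `K`-chain: an image of the standard chain under an element of `GL₂(L)`. -/
def IsKChainF (K L : Type*) [Field K] [Field L] (f : K →+* L)
    (C : Set (Submodule L (L × L))) : Prop :=
  ∃ γ : (Matrix (Fin 2) (Fin 2) L)ˣ, C = (ptActF L γ) '' StdChainF K L f


/-! ### Frame matrices -/

/-- The determinant of the matrix with rows `u` and `v`; for nonzero vectors it vanishes exactly
when they span the same point. -/
def wedge {F : Type*} [Field F] (u v : F × F) : F := u.1 * v.2 - u.2 * v.1

/-- The matrix mapping the points `F(1,0)`, `F(0,1)`, `F(1,1)` to the points spanned by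
`u`, `v`, `t`, provided these are pairwise independent. -/
def frameMat {F : Type*} [Field F] (u v t : F × F) : Matrix (Fin 2) (Fin 2) F :=
  !![wedge t v * u.1, wedge t v * u.2; wedge u t * v.1, wedge u t * v.2]

lemma det_frameMat {F : Type*} [Field F] (u v t : F × F) :
    (frameMat u v t).det = wedge t v * wedge u t * wedge u v := by
  simp only [frameMat, wedge, Matrix.det_fin_two_of]
  ring

lemma wedge_ne_zero {F : Type*} [Field F] {u v : F × F} (hu : u ≠ 0) (hv : v ≠ 0)
    (h : Submodule.span F {u} ≠ Submodule.span F {v}) : wedge u v ≠ 0 := by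
  intro hw
  apply h
  rw [Submodule.span_singleton_eq_span_singleton]
  obtain ⟨a, b⟩ := u
  obtain ⟨c, d⟩ := v
  simp only [wedge, ne_eq, Prod.mk_eq_zero, not_and_or] at hw hu hv
  by_cases ha : a = 0
  · subst ha
    have hb : b ≠ 0 := by simpa using hu
    have hc : c = 0 := by simpa [hb] using hw
    subst hc
    have hd : d ≠ 0 := by simpa using hv
    refine ⟨Units.mk0 (d / b) (div_ne_zero hd hb), ?_⟩
    simp [Units.smul_def, hb]
  · have hc : c ≠ 0 := by
      rintro rfl
      simp_all
    refine ⟨Units.mk0 (c / a) (div_ne_zero hc ha), ?_⟩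
    simp only [Units.smul_def, Units.val_mk0, Prod.smul_mk, smul_eq_mul, Prod.mk.injEq]
    constructor
    · field_simp
    · field_simp
      linear_combination -hw

/-! ### The action of `GL₂(L)` -/

section Action

variable {L : Type*} [Field L]

lemma rowMulF_mul (A B : Matrix (Fin 2) (Fin 2) L) :
    rowMulF L (A * B) = rowMulF L B ∘ₗ rowMulF L A := by
  refine LinearMap.ext fun v => ?_
  simp only [rowMulF, LinearMap.coe_mk, AddHom.coe_mk, LinearMap.comp_apply,
    Matrix.mul_apply, Fin.sum_univ_two, Prod.mk.injEq]
  constructor <;> ring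

lemma rowMulF_smul (c : L) (A : Matrix (Fin 2) (Fin 2) L) :
    rowMulF L (c • A) = c • rowMulF L A := by
  refine LinearMap.ext fun v => ?_
  simp only [rowMulF, LinearMap.coe_mk, AddHom.coe_mk, LinearMap.smul_apply,
    Matrix.smul_apply, Prod.smul_mk, smul_eq_mul, Prod.mk.injEq]
  constructor <;> ring

lemma ptActF_mul (γ δ : (Matrix (Fin 2) (Fin 2) L)ˣ) (p : Submodule L (L × L)) :
    ptActF L (γ * δ) p = ptActF L δ (ptActF L γ p) := by
  simp only [ptActF, Units.val_mul, rowMulF_mul, Submodule.map_comp]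

lemma ptActF_one (p : Submodule L (L × L)) : ptActF L 1 p = p := by
  have h : rowMulF L 1 = LinearMap.id := by
    refine LinearMap.ext fun v => ?_
    simp [rowMulF]
  simp only [ptActF, Units.val_one, h, Submodule.map_id]

lemma ptActF_injective (γ : (Matrix (Fin 2) (Fin 2) L)ˣ) : Function.Injective (ptActF L γ) := by
  intro p p' h
  have h' := congrArg (ptActF L γ⁻¹) h
  simpa only [← ptActF_mul, mul_inv_cancel, ptActF_one] using h'

lemma ptActF_span (γ : (Matrix (Fin 2) (Fin 2) L)ˣ) (v : L × L) :
    ptActF L γ (Submodule.span L {v}) = Submodule.span L {rowMulF L γ.val v} := by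
  simp only [ptActF, Submodule.map_span, Set.image_singleton]

/-- Proportional matrices act in the same way on points. -/
lemma ptActF_eq_of_smul {γ δ : (Matrix (Fin 2) (Fin 2) L)ˣ} {c : L} (hc : c ≠ 0)
    (h : γ.val = c • δ.val) : ptActF L γ = ptActF L δ := by
  funext p
  simp only [ptActF, h, rowMulF_smul, Submodule.map_smul _ _ _ hc]

lemma wedge_smul_rowMulF (γ : Matrix (Fin 2) (Fin 2) L) (c d : L) (u v : L × L) :
    wedge (c • rowMulF L γ u) (d • rowMulF L γ v) = c * d * γ.det * wedge u v := by
  simp only [wedge, rowMulF, LinearMap.coe_mk, AddHom.coe_mk, Prod.smul_mk, smul_eq_mul,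
    Matrix.det_fin_two]
  ring

/-- The frame matrix is equivariant up to a scalar, and homogeneous in each vector. -/
lemma frameMat_smul_rowMulF (γ : Matrix (Fin 2) (Fin 2) L) (c₁ c₂ c₃ : L) (u v t : L × L) :
    frameMat (c₁ • rowMulF L γ u) (c₂ • rowMulF L γ v) (c₃ • rowMulF L γ t) =
      (c₁ * c₂ * c₃ * γ.det) • (frameMat u v t * γ) := by
  ext i j
  fin_cases i <;> fin_cases j <;>
  · simp only [frameMat, wedge_smul_rowMulF]
    simp [rowMulF, Matrix.vecMul, dotProduct, Fin.sum_univ_two]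
    ring

end Action

/-! ### Chains -/

section Chain

variable {K L : Type*} [Field K] [Field L] (f : K →+* L)

lemma projLine_eq_stdChain : ProjLine L = StdChainF L L (RingHom.id L) := by
  ext p
  constructor
  · rintro ⟨⟨a, b⟩, h, rfl⟩
    exact ⟨a, b, h, rfl⟩
  · rintro ⟨a, b, h, rfl⟩
    exact ⟨(a, b), h, rfl⟩

/-- The normal form of the points of the standard chain: `none` stands for `L(0,1)` and
`some x` for `L(1,x)`. -/
def stdPoint : Option K → Submodule L (L × L)
  | none => Submodule.span L {(0, 1)}
  | some x => Submodule.span L {(1, f x)}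

lemma stdPoint_injective : Function.Injective (stdPoint f) := by
  rintro (_ | x) (_ | y) h
  · rfl
  · obtain ⟨z, hz⟩ := Submodule.span_singleton_eq_span_singleton.1 h
    simp [Units.smul_def] at hz
  · obtain ⟨z, hz⟩ := Submodule.span_singleton_eq_span_singleton.1 h
    simp [Units.smul_def] at hz
  · obtain ⟨z, hz⟩ := Submodule.span_singleton_eq_span_singleton.1 h
    simp only [Units.smul_def, Prod.smul_mk, smul_eq_mul, mul_one, Prod.mk.injEq] at hz
    rw [hz.1, one_mul] at hz
    rw [f.injective hz.2]

lemma range_stdPoint : Set.range (stdPoint f) = StdChainF K L f := by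
  ext p
  constructor
  · rintro ⟨_ | x, rfl⟩
    · exact ⟨0, 1, by simp, by simp [stdPoint]⟩
    · exact ⟨1, x, by simp, by simp [stdPoint]⟩
  · rintro ⟨a, b, h, rfl⟩
    by_cases ha : a = 0
    · subst ha
      have hb : f b ≠ 0 := by simpa using h
      refine ⟨none, Submodule.span_singleton_eq_span_singleton.2 ⟨Units.mk0 (f b) hb, ?_⟩⟩
      simp [Units.smul_def]
    · have ha' : f a ≠ 0 := by simpa using ha
      refine ⟨some (b / a), Submodule.span_singleton_eq_span_singleton.2
        ⟨Units.mk0 (f a) ha', ?_⟩⟩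
      simp only [Units.smul_def, Units.val_mk0, Prod.smul_mk, smul_eq_mul, mul_one, map_div₀]
      rw [mul_div_cancel₀ _ ha']

lemma card_stdChain [Finite K] : Nat.card (StdChainF K L f) = Nat.card K + 1 := by
  rw [← range_stdPoint, ← Finite.card_option]
  exact Nat.card_range_of_injective (stdPoint_injective f)

/-- The image of an element of `GL₂(K)` in `GL₂(L)`. -/
def glMap (M : (Matrix (Fin 2) (Fin 2) K)ˣ) : (Matrix (Fin 2) (Fin 2) L)ˣ :=
  Units.map f.mapMatrix.toMonoidHom M

lemma rowMulF_map (M : Matrix (Fin 2) (Fin 2) K) (y : K × K) :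
    rowMulF L (f.mapMatrix M) (y.map f f) = (rowMulF K M y).map f f := by
  simp [rowMulF]

lemma rowMulF_ne_zero (M : (Matrix (Fin 2) (Fin 2) K)ˣ) {y : K × K} (hy : y ≠ 0) :
    rowMulF K M.val y ≠ 0 := by
  intro h
  apply hy
  have h1 : rowMulF K (M * M⁻¹).val y = 0 := by
    rw [Units.val_mul, rowMulF_mul, LinearMap.comp_apply, h, map_zero]
  simpa [rowMulF] using h1

lemma ptActF_mem_stdChain (M : (Matrix (Fin 2) (Fin 2) K)ˣ) {p : Submodule L (L × L)}
    (hp : p ∈ StdChainF K L f) : ptActF L (glMap f M) p ∈ StdChainF K L f := by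
  obtain ⟨a, b, h, rfl⟩ := hp
  refine ⟨(rowMulF K M.val (a, b)).1, (rowMulF K M.val (a, b)).2, rowMulF_ne_zero M h, ?_⟩
  rw [ptActF_span]
  exact congrArg (fun v => Submodule.span L {v}) (rowMulF_map f M.val (a, b))

lemma ptActF_image_stdChain (M : (Matrix (Fin 2) (Fin 2) K)ˣ) :
    ptActF L (glMap f M) '' StdChainF K L f = StdChainF K L f := by
  apply Set.Subset.antisymm
  · rintro _ ⟨p, hp, rfl⟩
    exact ptActF_mem_stdChain f M hp
  · intro p hp
    refine ⟨_, ptActF_mem_stdChain f M⁻¹ hp, ?_⟩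
    rw [← ptActF_mul, glMap, glMap, ← map_mul, inv_mul_cancel, map_one, ptActF_one]

lemma map_wedge (y z : K × K) : f (wedge y z) = wedge (y.map f f) (z.map f f) := by
  simp [wedge]

lemma map_frameMat (x y z : K × K) :
    f.mapMatrix (frameMat x y z) = frameMat (x.map f f) (y.map f f) (z.map f f) := by
  ext i j
  fin_cases i <;> fin_cases j <;> simp [frameMat, map_wedge]

/-- A point `Lu` of the chain `C₀ · γ` comes from a vector with entries in `K`. -/
lemma exists_of_mem_chain (γ : (Matrix (Fin 2) (Fin 2) L)ˣ) {u : L × L}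
    (h : Submodule.span L {u} ∈ ptActF L γ '' StdChainF K L f) :
    ∃ (c : L) (y : K × K), c ≠ 0 ∧ u = c • rowMulF L γ.val (y.map f f) := by
  obtain ⟨_, ⟨a, b, -, rfl⟩, h⟩ := h
  rw [ptActF_span, Submodule.span_singleton_eq_span_singleton] at h
  obtain ⟨c, hc⟩ := h
  exact ⟨c, (a, b), c.ne_zero, hc.symm⟩

/-- The chain through three points is determined by the frame matrix of their spanning vectors. -/
lemma chain_eq (γ δ : (Matrix (Fin 2) (Fin 2) L)ˣ) {u v t : L × L} (hδ : δ.val = frameMat u v t)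
    (hu : Submodule.span L {u} ∈ ptActF L γ '' StdChainF K L f)
    (hv : Submodule.span L {v} ∈ ptActF L γ '' StdChainF K L f)
    (ht : Submodule.span L {t} ∈ ptActF L γ '' StdChainF K L f) :
    ptActF L γ '' StdChainF K L f = ptActF L δ '' StdChainF K L f := by
  obtain ⟨c₁, y₁, h₁, rfl⟩ := exists_of_mem_chain f γ hu
  obtain ⟨c₂, y₂, h₂, rfl⟩ := exists_of_mem_chain f γ hv
  obtain ⟨c₃, y₃, h₃, rfl⟩ := exists_of_mem_chain f γ ht
  have hγ : γ.val.det ≠ 0 := ((Matrix.isUnit_iff_isUnit_det _).1 γ.isUnit).ne_zero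
  rw [frameMat_smul_rowMulF, ← map_frameMat] at hδ
  have hM : (frameMat y₁ y₂ y₃).det ≠ 0 := by
    intro h0
    have hδ' : δ.val.det ≠ 0 := ((Matrix.isUnit_iff_isUnit_det _).1 δ.isUnit).ne_zero
    apply hδ'
    rw [hδ, Matrix.det_smul, Matrix.det_mul, ← RingHom.map_det, h0]
    simp
  set M : (Matrix (Fin 2) (Fin 2) K)ˣ := Matrix.GeneralLinearGroup.mkOfDetNeZero _ hM with hMdef
  have key : ptActF L δ = ptActF L (glMap f M * γ) :=
    ptActF_eq_of_smul (mul_ne_zero (mul_ne_zero (mul_ne_zero h₁ h₂) h₃) hγ) hδ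
  have hcomp : ptActF L (glMap f M * γ) = ptActF L γ ∘ ptActF L (glMap f M) :=
    funext (ptActF_mul _ _)
  rw [key, hcomp, Set.image_comp, ptActF_image_stdChain]

/-- If `(a,b)` is mapped to a nonzero multiple of `u`, then `Lu` lies on the chain. -/
lemma span_mem_chain (δ : (Matrix (Fin 2) (Fin 2) L)ˣ) {u : L × L} {c : L} (hc : c ≠ 0) (a b : K)
    (hab : (a, b) ≠ (0, 0)) (h : rowMulF L δ.val (f a, f b) = c • u) :
    Submodule.span L {u} ∈ ptActF L δ '' StdChainF K L f := by
  refine ⟨_, ⟨a, b, hab, rfl⟩, ?_⟩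
  rw [ptActF_span, h]
  exact Submodule.span_singleton_smul_eq hc.isUnit u

end Chain

/-- The finite Möbius geometry `Σ(GF(q), GF(q^h))` is a `3`-design with `v = q^h + 1`,
`k = q + 1` and `λ₃ = 1`. -/
theorem stmt_18 (q h : ℕ) (hq : 2 ≤ q) (hqpow : ∃ p n : ℕ, p.Prime ∧ 0 < n ∧ q = p ^ n)
    (hh : 1 ≤ h) {K L : Type*} [Field K] [Fintype K] [Field L] [Fintype L]
    (hcardK : Fintype.card K = q) (hcardL : Fintype.card L = q ^ h) (f : K →+* L) :
    Nat.card (ProjLine L) = q ^ h + 1 ∧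
    (∀ C : Set (Submodule L (L × L)), IsKChainF K L f C → Nat.card C = q + 1) ∧
    (∀ p₁ ∈ ProjLine L, ∀ p₂ ∈ ProjLine L, ∀ p₃ ∈ ProjLine L,
      p₁ ≠ p₂ → p₁ ≠ p₃ → p₂ ≠ p₃ →
        ∃! C : Set (Submodule L (L × L)),
          IsKChainF K L f C ∧ p₁ ∈ C ∧ p₂ ∈ C ∧ p₃ ∈ C) := by
  refine ⟨?_, ?_, ?_⟩
  · rw [projLine_eq_stdChain, card_stdChain, Nat.card_eq_fintype_card, hcardL]
  · rintro C ⟨γ, rfl⟩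
    rw [Nat.card_image_of_injective (ptActF_injective γ), card_stdChain,
      Nat.card_eq_fintype_card, hcardK]
  · rintro _ ⟨u, hu, rfl⟩ _ ⟨v, hv, rfl⟩ _ ⟨t, ht, rfl⟩ huv hut hvt
    have h₁ := wedge_ne_zero hu hv huv
    have h₂ := wedge_ne_zero hu ht hut
    have h₃ := wedge_ne_zero ht hv hvt.symm
    -- `δ` carries `L(1,0)`, `L(0,1)`, `L(1,1)` to the three given points.
    have hdet : (frameMat u v t).det ≠ 0 := by
      rw [det_frameMat]
      exact mul_ne_zero (mul_ne_zero h₃ h₂) h₁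
    obtain ⟨δ, hδ⟩ : ∃ δ : (Matrix (Fin 2) (Fin 2) L)ˣ, δ.val = frameMat u v t :=
      ⟨Matrix.GeneralLinearGroup.mkOfDetNeZero _ hdet, rfl⟩
    refine ⟨ptActF L δ '' StdChainF K L f, ⟨⟨δ, rfl⟩, ?_, ?_, ?_⟩, ?_⟩
    · refine span_mem_chain f δ h₃ 1 0 (by simp) ?_
      ext <;> simp [hδ, rowMulF, frameMat]
    · refine span_mem_chain f δ h₂ 0 1 (by simp) ?_
      ext <;> simp [hδ, rowMulF, frameMat]
    · refine span_mem_chain f δ h₁ 1 1 (by simp) ?_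
      ext <;> simp [hδ, rowMulF, frameMat, wedge] <;> ring
    · rintro _ ⟨⟨γ, rfl⟩, hu', hv', ht'⟩
      exact chain_eq f γ δ hδ hu' hv' ht'
end
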